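/- arXiv:2510.15743 — 5 statements merged into one kernel-verified Lean document; each statement's English description precedes it below -/
import Mathlib

section
/- Let L/J be an extension of fields of characteristic 2 such that J contains a primitive cube root of unity. Then L/J is Galois with Galois group isomorphic to the alternating group A₄ on four letters if and only if the following two conditions hold: (1) there exists an intermediate field K of L/J such that (a) K = J(c) for some element c ∈ K \ J with c³ ∈ J, and (b) K/J is Galois with Galois group cyclic of order 3 generated by an automorphism ρ̄ satisfying ρ̄(c) = ζc for some primitive cube root of unity ζ ∈ J; and (2) there exist u, v ∈ L with L = K(u, v) and u² − u = α for some α ∈ K such that (a) α ≠ ξ² − ξ for every ξ ∈ K, (b) α + ρ̄(α) + ρ̄²(α) = 0 (equivalently Tr_{K/J}(α) = 0), and (c) v² − v = ρ̄(α). -/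
open Polynomial

/-- A group of order `12` with a non-normal subgroup of order `3` is isomorphic to `A₄`. -/
theorem nonempty_mulEquiv_alternatingGroup_of_card_eq_twelve {G : Type*} [Group G]
    (hG : Nat.card G = 12) (T : Subgroup G) (hT : Nat.card T = 3) (hn : ¬ T.Normal) :
    Nonempty (G ≃* alternatingGroup (Fin 4)) := by
  have : Finite G := Nat.finite_of_card_ne_zero (by omega)
  have hq : Nat.card (G ⧸ T) = 4 := by
    have := T.card_eq_card_quotient_mul_card_subgroup
    rw [hG, hT] at this
    omega
  have hcore : T.normalCore = ⊥ := by
    have hdvd := Subgroup.card_dvd_of_le T.normalCore_le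
    rw [hT, Nat.dvd_prime Nat.prime_three] at hdvd
    rcases hdvd with h | h
    · exact Subgroup.card_eq_one.mp h
    · refine absurd ?_ hn
      have : T.normalCore = T :=
        Subgroup.eq_of_le_of_card_ge T.normalCore_le (by rw [hT, h])
      rw [← this]
      infer_instance
  let e : (G ⧸ T) ≃ Fin 4 := Finite.equivFinOfCardEq hq
  let f : G →* Equiv.Perm (Fin 4) :=
    e.permCongrHom.toMonoidHom.comp (MulAction.toPermHom G (G ⧸ T))
  have hf : Function.Injective f := by
    refine e.permCongrHom.injective.comp ?_
    rw [← MonoidHom.ker_eq_bot_iff, ← Subgroup.normalCore_eq_ker, hcore]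
  have hcard : Nat.card f.range = 12 := by
    rw [← hG]
    exact (Nat.card_congr (MonoidHom.ofInjective hf).toEquiv).symm
  have hidx : f.range.index = 2 := by
    have := f.range.card_mul_index
    rw [hcard, Nat.card_perm, Nat.card_eq_fintype_card, Fintype.card_fin] at this
    norm_num [Nat.factorial] at this
    omega
  have := Equiv.Perm.eq_alternatingGroup_of_index_eq_two hidx
  exact ⟨(MonoidHom.ofInjective hf).trans (MulEquiv.subgroupCongr this)⟩

theorem sq_sub_self_eq_iff {L : Type*} [Field L] [CharP L 2] {x y : L} :
    x ^ 2 - x = y ^ 2 - y ↔ x = y ∨ x = y + 1 := by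
  have h2 : (2 : L) = 0 := CharTwo.two_eq_zero
  constructor
  · intro h
    have : (x - y) * (x - (y + 1)) = 0 := by linear_combination h + (y ^ 2 - x * y) * h2
    rcases mul_eq_zero.mp this with h | h
    · exact .inl (sub_eq_zero.mp h)
    · exact .inr (sub_eq_zero.mp h)
  · rintro (rfl | rfl)
    · rfl
    · linear_combination y * h2

theorem exists_separable_splits {J L : Type*} [Field J] [Field L] [CharP L 2] [Algebra J L]
    {u v α β : L} (hu : u ^ 2 - u = α) (hv : v ^ 2 - v = β)
    (hα : α ≠ 0) (hβ : β ≠ 0) (hαβ : α ≠ β)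
    {p q : J} (hp : algebraMap J L p = α ^ 2 + α * β + β ^ 2)
    (hq : algebraMap J L q = α * β * (α + β)) :
    ∃ P : J[X], P.Separable ∧ (P.map (algebraMap J L)).Splits ∧ P.aeval u = 0 ∧ P.aeval v = 0 := by
  have h2 : (2 : L) = 0 := CharTwo.two_eq_zero
  have h2' : (2 : L[X]) = 0 := by rw [← C_ofNat, h2, C_0]
  let P : J[X] := (X ^ 2 - X) ^ 3 + C p * (X ^ 2 - X) + C q
  let f : Fin 6 → L := ![u, u + 1, v, v + 1, u + v, u + v + 1]
  have hP : P.map (algebraMap J L) = ∏ i, (X - C (f i)) := by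
    have key : ∀ a b x : L[X], (x ^ 2 - x) ^ 3 +
        ((a ^ 2 - a) ^ 2 + (a ^ 2 - a) * (b ^ 2 - b) + (b ^ 2 - b) ^ 2) * (x ^ 2 - x) +
        (a ^ 2 - a) * (b ^ 2 - b) * (a ^ 2 - a + (b ^ 2 - b)) =
        ((x - a) * (x - (a + 1))) * ((x - b) * (x - (b + 1))) *
          ((x - (a + b)) * (x - (a + b + 1))) := by
      intro a b x
      have hroot : ∀ a : L[X], (x - a) * (x - (a + 1)) = (x ^ 2 - x) - (a ^ 2 - a) := by
        intro a
        linear_combination (a ^ 2 - a * x) * h2'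
      rw [hroot, hroot, hroot,
        show (a + b) ^ 2 - (a + b) = (a ^ 2 - a) + (b ^ 2 - b) by
          linear_combination a * b * h2']
      generalize a ^ 2 - a = A, b ^ 2 - b = B, x ^ 2 - x = Y
      linear_combination ((A + B) * Y ^ 2 - A * B * Y + A * B * (A + B)) * h2'
    subst hu hv
    simp only [P, f, Polynomial.map_add, Polynomial.map_mul, Polynomial.map_sub,
      Polynomial.map_pow, map_X, map_C, hp, hq, Fin.prod_univ_six]
    simp
    linear_combination key (C u) (C v) X
  have hf : Function.Injective f := by
    have hne : ∀ x y : L, x ^ 2 - x ≠ y ^ 2 - y → x ≠ y ∧ x ≠ y + 1 := fun x y h =>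
      ⟨fun h' => h (sq_sub_self_eq_iff.2 (.inl h')), fun h' => h (sq_sub_self_eq_iff.2 (.inr h'))⟩
    obtain ⟨h₁, h₂⟩ := hne u v (by rwa [hu, hv])
    obtain ⟨h₃, h₄⟩ := hne u 0 (by simpa [hu] using hα)
    obtain ⟨h₅, h₆⟩ := hne v 0 (by simpa [hv] using hβ)
    have h1 : (1 : L) ≠ 0 := one_ne_zero
    clear_value P
    clear hP hne hu hv hα hβ hαβ hp hq h2'
    intro i j h
    fin_cases i <;> fin_cases j <;> first | rfl | (exfalso; simp [f] at h; try grind)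
  refine ⟨P, ?_, ?_, ?_, ?_⟩
  · rw [← separable_map (algebraMap J L), hP]
    exact separable_prod_X_sub_C_iff.2 hf
  · rw [hP]
    exact Splits.prod fun i _ => Splits.X_sub_C _
  · rw [← eval_map_algebraMap, hP, eval_prod]
    exact Finset.prod_eq_zero (Finset.mem_univ 0) (by simp [f])
  · rw [← eval_map_algebraMap, hP, eval_prod]
    exact Finset.prod_eq_zero (Finset.mem_univ 2) (by simp [f])

theorem isGalois_of_sup_adjoin_pair_eq_top {J L : Type*} [Field J] [Field L] [CharP L 2]
    [Algebra J L] {K : IntermediateField J L} [FiniteDimensional J K] [IsGalois J K]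
    {ρ : K ≃ₐ[J] K} (hgen : ∀ g : K ≃ₐ[J] K, g ∈ Subgroup.zpowers ρ) {u v : L} {α : K}
    (htop : K ⊔ IntermediateField.adjoin J {u, v} = ⊤)
    (hu : u ^ 2 - u = α) (hα : ∀ ξ : K, α ≠ ξ ^ 2 - ξ) (htr : α + ρ α + ρ (ρ α) = 0)
    (hv : v ^ 2 - v = (ρ α : K)) : FiniteDimensional J L ∧ IsGalois J L := by
  have : CharP K 2 := (algebraMap K L).charP (algebraMap K L).injective 2
  have h2 : (2 : K) = 0 := CharTwo.two_eq_zero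
  have hα0 : α ≠ 0 := by simpa using hα 0
  have hβ0 : ρ α ≠ 0 := by simpa using hα0
  have hργ : ρ (ρ α) = α + ρ α := by linear_combination htr - (α + ρ α) * h2
  have hαβ : α ≠ ρ α := by
    intro h
    rw [← h, ← h] at htr
    exact hα0 (by linear_combination htr - α * h2)
  have hfix : ∀ x : K, ρ x = x → ∃ p : J, algebraMap J K p = x := by
    intro x hx
    refine (IsGalois.mem_range_algebraMap_iff_fixed (F := J) x).2 fun g => ?_
    have : Subgroup.zpowers ρ ≤ MulAction.stabilizer (K ≃ₐ[J] K) x := by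
      rw [Subgroup.zpowers_le]
      exact hx
    exact this (hgen g)
  obtain ⟨p, hp⟩ := hfix (α ^ 2 + α * ρ α + ρ α ^ 2) (by
    simp only [map_add, map_mul, map_pow, hργ]
    linear_combination (ρ α ^ 2 + α * ρ α) * h2)
  obtain ⟨q, hq⟩ := hfix (α * ρ α * (α + ρ α)) (by
    simp only [map_add, map_mul, hργ]
    linear_combination (ρ α ^ 2 * (α + ρ α)) * h2)
  obtain ⟨P, hsep, hspl, hPu, hPv⟩ := exists_separable_splits (J := J) (p := p) (q := q) hu hv
    (by simpa using hα0) (by simpa using hβ0) (fun h => hαβ (Subtype.ext h))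
    (by rw [IsScalarTower.algebraMap_apply J K L, hp]; simp)
    (by rw [IsScalarTower.algebraMap_apply J K L, hq]; simp)
  have hP0 : P ≠ 0 := hsep.ne_zero
  have hS : IntermediateField.adjoin J ((K : Set L) ∪ {u, v}) = ⊤ := by
    rw [IntermediateField.adjoin_union, IntermediateField.adjoin_self, htop]
  have hmin : ∀ x ∈ (K : Set L) ∪ {u, v}, IsIntegral J x ∧ IsSeparable J x ∧
      ((minpoly J x).map (algebraMap J L)).Splits := by
    have hroot : ∀ x : L, P.aeval x = 0 → IsIntegral J x ∧ IsSeparable J x ∧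
        ((minpoly J x).map (algebraMap J L)).Splits := fun x hx =>
      ⟨IsAlgebraic.isIntegral ⟨P, hP0, hx⟩, hsep.of_dvd (minpoly.dvd J x hx),
        hspl.of_dvd (Polynomial.map_ne_zero hP0) (Polynomial.map_dvd _ (minpoly.dvd J x hx))⟩
    rintro x (hx | rfl | rfl)
    · have hm : minpoly J x = minpoly J (⟨x, hx⟩ : K) :=
        minpoly.algebraMap_eq (algebraMap K L).injective (⟨x, hx⟩ : K)
      have hi : IsIntegral J (⟨x, hx⟩ : K) := IsGalois.integral J _
      refine ⟨hi.algebraMap (B := L), ?_, ?_⟩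
      · rw [IsSeparable, hm]
        exact IsGalois.separable J _
      · rw [hm, IsScalarTower.algebraMap_eq J K L, ← Polynomial.map_map]
        exact (IsGalois.splits J (⟨x, hx⟩ : K)).map _
    · exact hroot _ hPu
    · exact hroot _ hPv
  have hfin : FiniteDimensional J L := by
    have : FiniteDimensional J (IntermediateField.adjoin J {u, v}) :=
      IntermediateField.finiteDimensional_adjoin fun x hx => (hmin x (.inr hx)).1
    have := IntermediateField.finiteDimensional_sup K (IntermediateField.adjoin J {u, v})
    rw [htop] at this
    exact IntermediateField.topEquiv.toLinearEquiv.finiteDimensional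
  refine ⟨hfin, isGalois_iff.2 ⟨?_, normal_iff.2 fun x => ⟨.of_finite J x, ?_⟩⟩⟩
  · have := (IntermediateField.isSeparable_adjoin_iff_isSeparable J L).2
      fun x hx => (hmin x hx).2.1
    rw [hS] at this
    exact AlgEquiv.Algebra.isSeparable IntermediateField.topEquiv
  · exact IntermediateField.splits_of_mem_adjoin J L
      (fun x hx => ⟨(hmin x hx).1, (hmin x hx).2.2⟩) (hS ▸ IntermediateField.mem_top)

theorem notMem_of_sq_sub_self_eq {J L : Type*} [Field J] [Field L] [Algebra J L]
    {K : IntermediateField J L} {α : K} (hα : ∀ ξ : K, α ≠ ξ ^ 2 - ξ) (g : K ≃ₐ[J] K) {w : L}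
    (hw : w ^ 2 - w = (g α : K)) : w ∉ K := by
  intro hK
  refine hα (g.symm ⟨w, hK⟩) ?_
  rw [← map_pow, ← map_sub, AlgEquiv.eq_symm_apply]
  exact Subtype.ext hw.symm

theorem card_fixingSubgroup_eq_four {J L : Type*} [Field J] [Field L] [CharP L 2]
    [Algebra J L] [FiniteDimensional J L] [IsGalois J L] {K : IntermediateField J L} {u v : L}
    (htop : K ⊔ IntermediateField.adjoin J {u, v} = ⊤)
    (hu : u ^ 2 - u ∈ K) (hv : v ^ 2 - v ∈ K)
    (huK : u ∉ K) (hvK : v ∉ K) (huvK : u + v ∉ K) : Nat.card K.fixingSubgroup = 4 := by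
  classical
  have h2 : (2 : L) = 0 := CharTwo.two_eq_zero
  have hfix : ∀ x ∉ K, ∃ σ ∈ K.fixingSubgroup, σ x ≠ x := by
    intro x hx
    by_contra! h
    refine hx ?_
    rw [← IsGalois.fixedField_fixingSubgroup K]
    exact fun σ => h σ.1 σ.2
  have hmove : ∀ x : L, x ^ 2 - x ∈ K → ∀ σ ∈ K.fixingSubgroup, σ x = x ∨ σ x = x + 1 := by
    intro x hx σ hσ
    rw [← sq_sub_self_eq_iff, ← map_pow, ← map_sub]
    exact hσ ⟨_, hx⟩
  have hmu := hmove u hu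
  have hmv := hmove v hv
  have h1 : (1 : L) ≠ 0 := one_ne_zero
  let f : K.fixingSubgroup → Bool × Bool := fun σ => (decide (σ.1 u = u), decide (σ.1 v = v))
  have hinj : Function.Injective f := by
    rintro ⟨σ, hσ⟩ ⟨τ, hτ⟩ h
    simp only [f, Prod.mk.injEq, decide_eq_decide] at h
    have hσu : σ u = τ u := by
      rcases hmu σ hσ with h' | h' <;> rcases hmu τ hτ with h'' | h'' <;> simp_all
    have hσv : σ v = τ v := by
      rcases hmv σ hσ with h' | h' <;> rcases hmv τ hτ with h'' | h'' <;> simp_all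
    have hstab : ∀ x, σ x = τ x →
        x ∈ IntermediateField.fixedField (Subgroup.zpowers (τ⁻¹ * σ)) := by
      intro x hx
      have hle : Subgroup.zpowers (τ⁻¹ * σ) ≤ MulAction.stabilizer (L ≃ₐ[J] L) x := by
        rw [Subgroup.zpowers_le]
        change τ⁻¹ (σ x) = x
        rw [hx]
        exact τ.symm_apply_apply x
      exact fun g => hle g.2
    have hle : K ⊔ IntermediateField.adjoin J {u, v} ≤
        IntermediateField.fixedField (Subgroup.zpowers (τ⁻¹ * σ)) := by
      refine sup_le (fun x hx => hstab x ?_) (IntermediateField.adjoin_le_iff.2 ?_)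
      · exact (hσ ⟨x, hx⟩).trans (hτ ⟨x, hx⟩).symm
      · rintro x (rfl | rfl)
        exacts [hstab _ hσu, hstab _ hσv]
    rw [htop] at hle
    refine Subtype.ext (AlgEquiv.ext fun x => ?_)
    have hx : τ⁻¹ (σ x) = x :=
      hle (IntermediateField.mem_top (x := x)) ⟨_, Subgroup.mem_zpowers (τ⁻¹ * σ)⟩
    exact ((AlgEquiv.symm_apply_eq τ).1 hx)
  have hsurj : Function.Surjective f := by
    obtain ⟨s₁, hs₁, h₁⟩ := hfix u huK
    obtain ⟨s₂, hs₂, h₂⟩ := hfix v hvK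
    obtain ⟨s₃, hs₃, h₃⟩ := hfix (u + v) huvK
    have e₁ := (hmu s₁ hs₁).resolve_left h₁
    have e₂ := (hmv s₂ hs₂).resolve_left h₂
    have key : (∃ σ ∈ K.fixingSubgroup, σ u ≠ u ∧ σ v = v) ∧
        (∃ σ ∈ K.fixingSubgroup, σ u = u ∧ σ v ≠ v) := by
      rw [map_add] at h₃
      rcases hmu s₃ hs₃ with a | a <;> rcases hmv s₃ hs₃ with b | b
      · exact absurd (by rw [a, b]) h₃
      · refine ⟨?_, s₃, hs₃, a, by simp [b]⟩
        rcases hmv s₁ hs₁ with c | c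
        · exact ⟨s₁, hs₁, h₁, c⟩
        · refine ⟨s₃ * s₁, mul_mem hs₃ hs₁, by simp [e₁, a], ?_⟩
          simp only [AlgEquiv.mul_apply, c, b, map_add, map_one]
          linear_combination h2
      · refine ⟨⟨s₃, hs₃, by simp [a], b⟩, ?_⟩
        rcases hmu s₂ hs₂ with c | c
        · exact ⟨s₂, hs₂, c, h₂⟩
        · refine ⟨s₃ * s₂, mul_mem hs₃ hs₂, ?_, by simp [e₂, b]⟩
          simp only [AlgEquiv.mul_apply, c, a, map_add, map_one]
          linear_combination h2
      · exact absurd (by rw [a, b]; linear_combination h2) h₃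
    obtain ⟨⟨s, hs, su, sv⟩, t, ht, tu, tv⟩ := key
    have su' := (hmu s hs).resolve_left su
    have tv' := (hmv t ht).resolve_left tv
    rintro ⟨_ | _, _ | _⟩
    · exact ⟨⟨s * t, mul_mem hs ht⟩, by simp [f, tu, su', tv', sv]⟩
    · exact ⟨⟨s, hs⟩, by simp [f, su, sv]⟩
    · exact ⟨⟨t, ht⟩, by simp [f, tu, tv]⟩
    · exact ⟨1, by simp [f]⟩
  rw [Nat.card_eq_of_bijective f ⟨hinj, hsurj⟩]
  simp

theorem nonempty_mulEquiv_of_sup_adjoin_pair_eq_top {J L : Type*} [Field J] [Field L] [CharP L 2]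
    [Algebra J L] [FiniteDimensional J L] [IsGalois J L] {K : IntermediateField J L} [IsGalois J K]
    {ρ : K ≃ₐ[J] K} (hρ : orderOf ρ = 3) (hgen : ∀ g : K ≃ₐ[J] K, g ∈ Subgroup.zpowers ρ)
    {u v : L} {α : K} (htop : K ⊔ IntermediateField.adjoin J {u, v} = ⊤)
    (hu : u ^ 2 - u = α) (hα : ∀ ξ : K, α ≠ ξ ^ 2 - ξ) (htr : α + ρ α + ρ (ρ α) = 0)
    (hv : v ^ 2 - v = (ρ α : K)) : Nonempty ((L ≃ₐ[J] L) ≃* alternatingGroup (Fin 4)) := by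
  have h2 : (2 : L) = 0 := CharTwo.two_eq_zero
  have huK : u ∉ K := notMem_of_sq_sub_self_eq hα 1 hu
  have hvK : v ∉ K := notMem_of_sq_sub_self_eq hα ρ hv
  have huvK : u + v ∉ K := by
    refine notMem_of_sq_sub_self_eq hα (ρ * ρ) ?_
    have := congrArg (Subtype.val) htr
    push_cast at this
    rw [AlgEquiv.mul_apply]
    linear_combination this + hu + hv + (u * v - ((ρ (ρ α) : K) : L)) * h2
  have hV := card_fixingSubgroup_eq_four htop (hu ▸ α.2) (hv ▸ (ρ α).2) huK hvK huvK
  have hK : Module.finrank J K = 3 := by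
    rw [← IsGalois.card_aut_eq_finrank, ← hρ, orderOf_eq_card_of_forall_mem_zpowers hgen]
  have hG : Nat.card (L ≃ₐ[J] L) = 12 := by
    rw [IsGalois.card_aut_eq_finrank, ← Module.finrank_mul_finrank J K L, hK,
      ← IsGalois.card_fixingSubgroup_eq_finrank, hV]
  have hfix : ∀ x ∉ K, ∃ σ ∈ K.fixingSubgroup, σ x ≠ x := by
    intro x hx
    by_contra! h
    refine hx ?_
    rw [← IsGalois.fixedField_fixingSubgroup K]
    exact fun σ => h σ.1 σ.2
  obtain ⟨t, ht, htρ⟩ : ∃ t : L ≃ₐ[J] L, orderOf t = 3 ∧ ∀ x : K, t x = (ρ x : K) := by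
    have : Fact (Nat.Prime 3) := ⟨Nat.prime_three⟩
    obtain ⟨t, ht⟩ := exists_prime_orderOf_dvd_card' (G := L ≃ₐ[J] L) 3 (by rw [hG]; decide)
    have hres : ∀ (s : L ≃ₐ[J] L) (x : K), s x = (AlgEquiv.restrictNormalHom K s x : K) :=
      fun s x => (AlgEquiv.restrictNormal_commutes s K x).symm
    classical
    obtain ⟨n, hn, hn'⟩ := Finset.mem_image.1
      (mem_zpowers_iff_mem_range_orderOf.1 (hgen (AlgEquiv.restrictNormalHom K t)))
    rw [hρ, Finset.mem_range] at hn
    have hρ3 : ρ ^ 3 = 1 := hρ ▸ pow_orderOf_eq_one ρ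
    interval_cases n
    · have htV : t ∈ K.fixingSubgroup := fun x => by
        rw [pow_zero] at hn'
        change t x = x
        rw [hres, ← hn']
        rfl
      have hdvd := Subgroup.orderOf_dvd_natCard _ htV
      rw [hV, ht] at hdvd
      omega
    · exact ⟨t, ht, fun x => by rw [hres, ← hn', pow_one]⟩
    · refine ⟨t⁻¹, by rw [orderOf_inv, ht], fun x => ?_⟩
      have hinv : (ρ ^ 2)⁻¹ = ρ := inv_eq_of_mul_eq_one_right (by rw [← pow_succ, hρ3])
      rw [hres, map_inv, ← hn', hinv]
  refine nonempty_mulEquiv_alternatingGroup_of_card_eq_twelve hG (Subgroup.zpowers t)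
    (by rw [Nat.card_zpowers, ht]) fun hn => ?_
  have hdisj : Disjoint (Subgroup.zpowers t) K.fixingSubgroup := by
    refine Subgroup.disjoint_of_coprime_natCard ?_
    rw [Nat.card_zpowers, ht, hV]
    decide
  have hcomm : ∀ σ ∈ K.fixingSubgroup, ∀ x, t (σ x) = σ (t x) := by
    intro σ hσ x
    have := Subgroup.commute_of_normal_of_disjoint _ _ hn inferInstance hdisj t σ
      (Subgroup.mem_zpowers t) hσ
    exact DFunLike.congr_fun this.eq x
  have htu : t u = v ∨ t u = v + 1 := by
    rw [← sq_sub_self_eq_iff, hv, ← htρ, ← hu]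
    simp
  obtain ⟨σ, hσ, hne⟩ := hfix (u + v) huvK
  have hσu : σ u = u ∨ σ u = u + 1 := by
    rw [← sq_sub_self_eq_iff, ← map_pow, ← map_sub, hu]
    exact hσ α
  have hc := hcomm σ hσ u
  refine hne ?_
  rw [map_add]
  rcases htu with h | h <;> rcases hσu with h' | h' <;>
    simp only [h, h', map_add, map_one] at hc ⊢ <;> grind

/-- The data describing a Klein four normal subgroup `{1, a, b, a * b}` together with an element
`t` permuting `a`, `b`, `a * b` cyclically. -/
theorem exists_klein_four_of_mulEquiv {G : Type*} [Group G] (e : G ≃* alternatingGroup (Fin 4)) :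
    ∃ (V : Subgroup G) (a b t : G), V.Normal ∧ (∀ g, g ∈ V ↔ g = 1 ∨ g = a ∨ g = b ∨ g = a * b) ∧
      Function.Injective ![1, a, b, a * b] ∧ a * a = 1 ∧ b * b = 1 ∧ a * b = b * a ∧
      t * a = b * t ∧ t * b = a * b * t ∧ t * t * t = 1 ∧ t ∉ V ∧
      ∀ g, g ∈ V ∨ t * g ∈ V ∨ t * (t * g) ∈ V := by
  obtain ⟨V, a, b, t, hV, hmem, hinj, haa, hbb, hab, hta, htb, httt, htV, hcos⟩ :
      ∃ (V : Subgroup (alternatingGroup (Fin 4))) (a b t : alternatingGroup (Fin 4)), V.Normal ∧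
        (∀ g, g ∈ V ↔ g = 1 ∨ g = a ∨ g = b ∨ g = a * b) ∧
        Function.Injective ![1, a, b, a * b] ∧ a * a = 1 ∧ b * b = 1 ∧ a * b = b * a ∧
        t * a = b * t ∧ t * b = a * b * t ∧ t * t * t = 1 ∧ t ∉ V ∧
        ∀ g, g ∈ V ∨ t * g ∈ V ∨ t * (t * g) ∈ V := by
    let a : alternatingGroup (Fin 4) :=
      ⟨Equiv.swap 0 1 * Equiv.swap 2 3, by rw [Equiv.Perm.mem_alternatingGroup]; decide⟩
    let b : alternatingGroup (Fin 4) :=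
      ⟨Equiv.swap 0 2 * Equiv.swap 1 3, by rw [Equiv.Perm.mem_alternatingGroup]; decide⟩
    let t : alternatingGroup (Fin 4) :=
      ⟨Equiv.swap 1 2 * Equiv.swap 2 3, by rw [Equiv.Perm.mem_alternatingGroup]; decide⟩
    have hmul : ∀ x y, (x = 1 ∨ x = a ∨ x = b ∨ x = a * b) →
        (y = 1 ∨ y = a ∨ y = b ∨ y = a * b) →
        (x * y = 1 ∨ x * y = a ∨ x * y = b ∨ x * y = a * b) := by
      rintro _ _ (rfl | rfl | rfl | rfl) (rfl | rfl | rfl | rfl) <;> decide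
    have hinv : ∀ x, (x = 1 ∨ x = a ∨ x = b ∨ x = a * b) →
        (x⁻¹ = 1 ∨ x⁻¹ = a ∨ x⁻¹ = b ∨ x⁻¹ = a * b) := by
      rintro _ (rfl | rfl | rfl | rfl) <;> decide
    have hconj : ∀ x, (x = 1 ∨ x = a ∨ x = b ∨ x = a * b) → ∀ g,
        (g * x * g⁻¹ = 1 ∨ g * x * g⁻¹ = a ∨ g * x * g⁻¹ = b ∨ g * x * g⁻¹ = a * b) := by
      rintro _ (rfl | rfl | rfl | rfl) <;> decide
    let V : Subgroup (alternatingGroup (Fin 4)) :=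
      { carrier := {g | g = 1 ∨ g = a ∨ g = b ∨ g = a * b}
        mul_mem' := hmul _ _
        one_mem' := .inl rfl
        inv_mem' := hinv _ }
    refine ⟨V, a, b, t, ⟨fun x hx g => hconj x hx g⟩, fun _ => Iff.rfl, by decide, by decide,
      by decide, by decide, by decide, by decide, by decide, ?_, ?_⟩
    · change ¬ (t = 1 ∨ t = a ∨ t = b ∨ t = a * b)
      decide
    · change ∀ g, (g = 1 ∨ g = a ∨ g = b ∨ g = a * b) ∨
        (t * g = 1 ∨ t * g = a ∨ t * g = b ∨ t * g = a * b) ∨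
        (t * (t * g) = 1 ∨ t * (t * g) = a ∨ t * (t * g) = b ∨ t * (t * g) = a * b)
      decide
  refine ⟨V.comap e.toMonoidHom, e.symm a, e.symm b, e.symm t, hV.comap _, fun g => ?_, ?_,
    by rw [← map_mul, haa, map_one], by rw [← map_mul, hbb, map_one],
    by rw [← map_mul, hab, map_mul], by rw [← map_mul, hta, map_mul],
    by rw [← map_mul, htb, map_mul, map_mul], by rw [← map_mul, ← map_mul, httt, map_one],
    by simpa using htV, fun g => by simpa using hcos (e g)⟩
  · simp only [Subgroup.mem_comap, ← map_mul, MulEquiv.eq_symm_apply]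
    simpa using hmem (e g)
  · have : ![1, e.symm a, e.symm b, e.symm a * e.symm b] = e.symm ∘ ![1, a, b, a * b] := by
      funext i
      fin_cases i <;> simp
    rw [this]
    exact e.symm.injective.comp hinj

theorem exists_apply_add_eq_one {J L : Type*} [Field J] [Field L] [Algebra J L]
    {a b : L ≃ₐ[J] L} (hinj : Function.Injective ![1, a, b, a * b]) (haa : a * a = 1)
    (hbb : b * b = 1) (hab : a * b = b * a) : ∃ w : L, w + a w + b w + a (b w) = 1 := by
  have hli : LinearIndependent L fun i => (⇑((![1, a, b, a * b] i : L ≃ₐ[J] L)) : L → L) := by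
    refine (linearIndependent_monoidHom L L).comp
      (fun i => ((![1, a, b, a * b] i : L ≃ₐ[J] L) : L →* L)) fun i j h => hinj ?_
    exact AlgEquiv.ext fun x => DFunLike.congr_fun h x
  obtain ⟨w, hw⟩ : ∃ w : L, w + a w + b w + a (b w) ≠ 0 := by
    by_contra! h
    have := Fintype.linearIndependent_iff.1 hli (fun _ => 1) (by
      funext x
      simpa [Fin.sum_univ_four] using h x) 0
    exact one_ne_zero this
  have ha : ∀ x, a (a x) = x := fun x => DFunLike.congr_fun haa x
  have hb : ∀ x, b (b x) = x := fun x => DFunLike.congr_fun hbb x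
  have hab' : ∀ x, b (a x) = a (b x) := fun x => (DFunLike.congr_fun hab x).symm
  set s := w + a w + b w + a (b w) with hs
  have has : a s = s := by
    simp only [hs, map_add, ha]
    ring
  have hbs : b s = s := by
    simp only [hs, map_add, hab', hb]
    ring
  refine ⟨w / s, ?_⟩
  simp only [map_div₀, has, hbs]
  field_simp
  exact hs.symm

theorem exists_primitiveRoot_of_orderOf_eq_three {J K : Type*} [Field J] [Field K] [Algebra J K]
    [FiniteDimensional J K] [IsGalois J K] {ζ₀ : J} (hζ₀ : IsPrimitiveRoot ζ₀ 3) {ρ : K ≃ₐ[J] K}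
    (hρ : orderOf ρ = 3) (hgen : ∀ g : K ≃ₐ[J] K, g ∈ Subgroup.zpowers ρ) :
    ∃ (ζ : J) (c : K), c ∉ (algebraMap J K).range ∧ c ^ 3 ∈ (algebraMap J K).range ∧
      IntermediateField.adjoin J {c} = ⊤ ∧ IsPrimitiveRoot ζ 3 ∧ ρ c = algebraMap J K ζ * c := by
  have hK : Module.finrank J K = 3 := by
    rw [← IsGalois.card_aut_eq_finrank, ← hρ, orderOf_eq_card_of_forall_mem_zpowers hgen]
  have : IsCyclic (K ≃ₐ[J] K) := ⟨ρ, hgen⟩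
  obtain ⟨c, hc3, hc⟩ := exists_root_adjoin_eq_top_of_isCyclic J K
    ⟨ζ₀, by rw [hK, mem_primitiveRoots three_pos]; exact hζ₀⟩
  rw [hK] at hc3
  have hcJ : c ∉ (algebraMap J K).range := by
    intro h
    have hbot : IntermediateField.adjoin J {c} = ⊥ :=
      IntermediateField.adjoin_simple_eq_bot_iff.2 (IntermediateField.mem_bot.2 h)
    rw [hc] at hbot
    have := IntermediateField.finrank_top' (F := J) (E := K)
    rw [hbot, IntermediateField.finrank_bot, hK] at this
    omega
  have hc0 : c ≠ 0 := by
    rintro rfl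
    exact hcJ (zero_mem _)
  obtain ⟨d, hd⟩ := hc3
  have hζ₀K := hζ₀.map_of_injective (algebraMap J K).injective
  obtain ⟨i, -, hi⟩ := hζ₀K.eq_pow_of_pow_eq_one (ξ := ρ c / c) (by
    rw [div_pow, ← map_pow, ← hd, AlgEquiv.commutes, div_self]
    rw [hd]
    exact pow_ne_zero 3 hc0)
  have hρc : ρ c = algebraMap J K (ζ₀ ^ i) * c := by
    rw [map_pow, hi, div_mul_cancel₀ _ hc0]
  refine ⟨ζ₀ ^ i, c, hcJ, ⟨d, hd⟩, hc, hζ₀.pow_of_coprime i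
    ((Nat.prime_three.coprime_iff_not_dvd).2 fun h => hcJ ?_).symm, hρc⟩
  rw [(hζ₀.pow_eq_one_iff_dvd i).2 h, map_one, one_mul] at hρc
  have hle : Subgroup.zpowers ρ ≤ MulAction.stabilizer (K ≃ₐ[J] K) c := by
    rw [Subgroup.zpowers_le]
    exact hρc
  exact (IsGalois.mem_range_algebraMap_iff_fixed (F := J) c).2 fun g => hle (hgen g)

theorem exists_artinSchreier_generators {J L : Type*} [Field J] [Field L] [CharP L 2] [Algebra J L]
    {a b t : L ≃ₐ[J] L} (hinj : Function.Injective ![1, a, b, a * b]) (haa : a * a = 1)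
    (hbb : b * b = 1) (hab : a * b = b * a) (hta : t * a = b * t) (htb : t * b = a * b * t)
    (httt : t * t * t = 1) :
    ∃ u : L, u + t u + t (t u) = 0 ∧ a u = u + 1 ∧ b u = u + 1 ∧ a (t u) = t u ∧
      b (t u) = t u + 1 := by
  have h2 : (2 : L) = 0 := CharTwo.two_eq_zero
  obtain ⟨w₀, hw₀⟩ := exists_apply_add_eq_one hinj haa hbb hab
  have ha : ∀ x, a (a x) = x := fun x => DFunLike.congr_fun haa x
  have hb : ∀ x, b (b x) = x := fun x => DFunLike.congr_fun hbb x
  have hba : ∀ x, b (a x) = a (b x) := fun x => (DFunLike.congr_fun hab x).symm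
  have hta' : ∀ x, t (a x) = b (t x) := fun x => DFunLike.congr_fun hta x
  have htb' : ∀ x, t (b x) = a (b (t x)) := fun x => DFunLike.congr_fun htb x
  have ht : ∀ x, t (t (t x)) = x := fun x => DFunLike.congr_fun httt x
  obtain ⟨w, hw, htw⟩ : ∃ w : L, w + a w + b w + a (b w) = 1 ∧ t w = w := by
    refine ⟨w₀ + t w₀ + t (t w₀), ?_, by simp only [map_add, ht]; ring⟩
    have h₁ := congrArg t hw₀
    have h₂ := congrArg t h₁
    simp only [map_add, hta', htb', hba, hb, map_one] at h₁ h₂ ⊢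
    linear_combination hw₀ + h₁ + h₂ + h2
  refine ⟨a w + b w, ?_, ?_, ?_, ?_, ?_⟩ <;> simp only [map_add, hta', htb', hba, hb, ha, htw]
  · linear_combination (a w + b w + a (b w)) * h2
  · linear_combination hw - (a w + b w) * h2
  · linear_combination hw - (a w + b w) * h2
  · ring
  · linear_combination hw - (b w + a (b w)) * h2

theorem exists_data_of_mulEquiv_alternatingGroup {J L : Type*} [Field J] [Field L] [CharP L 2]
    [Algebra J L] {ζ₀ : J} (hζ₀ : IsPrimitiveRoot ζ₀ 3) [FiniteDimensional J L] [IsGalois J L]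
    (e : (L ≃ₐ[J] L) ≃* alternatingGroup (Fin 4)) :
    ∃ (K : IntermediateField J L) (ρ : K ≃ₐ[J] K) (ζ : J) (c : L) (hcK : c ∈ K),
      c ∉ (algebraMap J L).range ∧
      c ^ 3 ∈ (algebraMap J L).range ∧
      IntermediateField.adjoin J {c} = K ∧
      IsGalois J K ∧
      orderOf ρ = 3 ∧
      (∀ g : K ≃ₐ[J] K, g ∈ Subgroup.zpowers ρ) ∧
      IsPrimitiveRoot ζ 3 ∧
      ρ ⟨c, hcK⟩ = algebraMap J K ζ * ⟨c, hcK⟩ ∧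
      ∃ (u v : L) (α : K),
        K ⊔ IntermediateField.adjoin J {u, v} = ⊤ ∧
        u ^ 2 - u = (α : L) ∧
        (∀ ξ : K, α ≠ ξ ^ 2 - ξ) ∧
        α + ρ α + ρ (ρ α) = 0 ∧
        v ^ 2 - v = ((ρ α : K) : L) := by
  have h2 : (2 : L) = 0 := CharTwo.two_eq_zero
  obtain ⟨V, a, b, t, hV, hmem, hinj, haa, hbb, hab, hta, htb, httt, htV, hcos⟩ :=
    exists_klein_four_of_mulEquiv e
  obtain ⟨u, htr, hau, hbu, hav, hbv⟩ :=
    exists_artinSchreier_generators hinj haa hbb hab hta htb httt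
  let K := IntermediateField.fixedField V
  have hKfix : K.fixingSubgroup = V := IntermediateField.fixingSubgroup_fixedField V
  have hfix : ∀ g ∈ V, ∀ x ∈ K, g x = x := fun g hg x hx => hx ⟨g, hg⟩
  have haV : a ∈ V := (hmem a).2 (.inr (.inl rfl))
  have hbV : b ∈ V := (hmem b).2 (.inr (.inr (.inl rfl)))
  let r := AlgEquiv.restrictNormalHom (F := J) (K₁ := L) K
  have hres : ∀ (s : L ≃ₐ[J] L) (x : K), (r s x : L) = s x :=
    fun s x => AlgEquiv.restrictNormal_commutes s K x
  have hrV : ∀ s, r s = 1 ↔ s ∈ V := by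
    intro s
    rw [← hKfix]
    refine ⟨fun h x => ?_, fun h => AlgEquiv.ext fun x => Subtype.ext ?_⟩
    · change s x = x
      rw [← hres, h]
      rfl
    · rw [hres]
      exact h x
  have hρ : orderOf (r t) = 3 := by
    have : Fact (Nat.Prime 3) := ⟨Nat.prime_three⟩
    refine orderOf_eq_prime ?_ (mt (hrV t).1 htV)
    rw [← map_pow, pow_succ, pow_two, httt, map_one]
  have hgen : ∀ g : K ≃ₐ[J] K, g ∈ Subgroup.zpowers (r t) := by
    intro g
    obtain ⟨g, rfl⟩ := AlgEquiv.restrictNormalHom_surjective (F := J) (K₁ := K) L g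
    change r g ∈ _
    have ht := Subgroup.mem_zpowers (r t)
    rcases hcos g with h | h | h <;> have h := (hrV _).2 h
    · rw [h]
      exact one_mem _
    · rw [map_mul] at h
      exact (Subgroup.mul_mem_cancel_left _ ht).1 (h ▸ one_mem _)
    · rw [map_mul, map_mul] at h
      exact (Subgroup.mul_mem_cancel_left _ ht).1
        ((Subgroup.mul_mem_cancel_left _ ht).1 (h ▸ one_mem _))
  obtain ⟨ζ, c, hcJ, ⟨d, hd⟩, hc, hζ, hρc⟩ := exists_primitiveRoot_of_orderOf_eq_three hζ₀ hρ hgen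
  have hα : u ^ 2 - u ∈ K := by
    have ha : a (u ^ 2 - u) = u ^ 2 - u := by
      rw [map_sub, map_pow, hau]
      linear_combination u * h2
    have hb : b (u ^ 2 - u) = u ^ 2 - u := by
      rw [map_sub, map_pow, hbu]
      linear_combination u * h2
    rintro ⟨g, hg⟩
    change g (u ^ 2 - u) = u ^ 2 - u
    rcases (hmem g).1 hg with rfl | rfl | rfl | rfl
    · rfl
    · exact ha
    · exact hb
    · rw [AlgEquiv.mul_apply, hb, ha]
  refine ⟨K, r t, ζ, c, c.2, ?_, ?_, ?_, inferInstance, hρ, hgen, hζ, hρc,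
    u, t u, ⟨u ^ 2 - u, hα⟩, ?_, rfl, ?_, ?_, ?_⟩
  · rintro ⟨x, hx⟩
    exact hcJ ⟨x, Subtype.ext hx⟩
  · exact ⟨d, congrArg Subtype.val hd⟩
  · have := congrArg (IntermediateField.map K.val) hc
    rwa [IntermediateField.adjoin_map, ← AlgHom.fieldRange_eq_map, IntermediateField.fieldRange_val,
      Set.image_singleton] at this
  · rw [← IsGalois.fixedField_fixingSubgroup (K ⊔ IntermediateField.adjoin J {u, t u})]
    have hbot : (K ⊔ IntermediateField.adjoin J {u, t u}).fixingSubgroup = ⊥ := by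
      rw [eq_bot_iff]
      intro g hg
      have hgV : g ∈ V := by
        rw [← hKfix]
        exact fun x => hg ⟨x, (le_sup_left : K ≤ _) x.2⟩
      have hadj : ∀ x ∈ ({u, t u} : Set L), g x = x := fun x hx =>
        hg ⟨x, (le_sup_right : _ ≤ K ⊔ IntermediateField.adjoin J {u, t u})
          (IntermediateField.subset_adjoin J _ hx)⟩
      have hgu := hadj u (by simp)
      have hgv := hadj (t u) (by simp)
      rcases (hmem g).1 hgV with rfl | rfl | rfl | rfl
      · exact one_mem _
      · simp [hau] at hgu
      · simp [hbu] at hgu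
      · simp [hav, hbv] at hgv
    rw [hbot, IntermediateField.fixedField_bot]
  · intro ξ hξ
    have hξ' : u ^ 2 - u = (ξ : L) ^ 2 - ξ := congrArg Subtype.val hξ
    have huK : u ∈ K := by
      rcases sq_sub_self_eq_iff.1 hξ' with h | h
      · exact h ▸ ξ.2
      · exact h ▸ add_mem ξ.2 (one_mem K)
    have := hfix a haV u huK
    simp [hau] at this
  · refine Subtype.ext ?_
    push_cast
    rw [hres, hres, hres]
    simp only [map_sub, map_pow]
    linear_combination (u + t u + t (t u) - 1) * htr -
      (u * t u + u * t (t u) + t u * t (t u)) * h2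
  · rw [hres, map_sub, map_pow]

/-- **Theorem (Galois A₄ extensions in characteristic 2).**
Let `L/J` be an extension of fields of characteristic `2` where `J` contains a primitive
cube root of unity.  Then `L/J` is Galois with Galois group isomorphic to the alternating
group `A₄` if and only if conditions (1) and (2) of the statement hold. -/
theorem stmt_0 (J L : Type) [Field J] [Field L] [CharP J 2] [CharP L 2] [Algebra J L]
    (hζJ : ∃ ζ₀ : J, IsPrimitiveRoot ζ₀ 3) :
    (IsGalois J L ∧ Nonempty ((L ≃ₐ[J] L) ≃* ↥(alternatingGroup (Fin 4)))) ↔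
    ∃ (K : IntermediateField J L) (ρ : ↥K ≃ₐ[J] ↥K) (ζ : J) (c : L) (hcK : c ∈ K),
      -- (1)(a): K = J(c) with c ∈ K \ J and c³ ∈ J
      c ∉ (algebraMap J L).range ∧
      c ^ 3 ∈ (algebraMap J L).range ∧
      IntermediateField.adjoin J {c} = K ∧
      -- (1)(b): K/J Galois with cyclic Galois group of order 3 generated by ρ, ρ c = ζ c
      IsGalois J ↥K ∧
      orderOf ρ = 3 ∧
      (∀ g : ↥K ≃ₐ[J] ↥K, g ∈ Subgroup.zpowers ρ) ∧
      IsPrimitiveRoot ζ 3 ∧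
      ρ ⟨c, hcK⟩ = algebraMap J ↥K ζ * ⟨c, hcK⟩ ∧
      -- (2): L = K(u, v), u² - u = α ∈ K with the stated properties
      ∃ (u v : L) (α : ↥K),
        K ⊔ IntermediateField.adjoin J {u, v} = ⊤ ∧
        u ^ 2 - u = (α : L) ∧
        (∀ ξ : ↥K, α ≠ ξ ^ 2 - ξ) ∧
        α + ρ α + ρ (ρ α) = 0 ∧
        v ^ 2 - v = ((ρ α : ↥K) : L) := by
  constructor
  · rintro ⟨_, ⟨e⟩⟩
    obtain ⟨ζ₀, hζ₀⟩ := hζJ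
    have : Finite (L ≃ₐ[J] L) := Finite.of_equiv _ e.symm.toEquiv
    have : FiniteDimensional J L := IsGalois.finiteDimensional_of_finite J L
    exact exists_data_of_mulEquiv_alternatingGroup hζ₀ e
  · rintro ⟨K, ρ, ζ, c, hcK, -, -, -, hGal, hρ, hgen, -, -, u, v, α, htop, hu, hα, htr, hv⟩
    have hfin : Finite (K ≃ₐ[J] K) :=
      Nat.finite_of_card_ne_zero (by rw [← orderOf_eq_card_of_forall_mem_zpowers hgen, hρ]; decide)
    have : FiniteDimensional J K := IsGalois.finiteDimensional_of_finite J K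
    obtain ⟨_, _⟩ := isGalois_of_sup_adjoin_pair_eq_top hgen htop hu hα htr hv
    exact ⟨inferInstance, nonempty_mulEquiv_of_sup_adjoin_pair_eq_top hρ hgen htop hu hα htr hv⟩
end

section
/- Let k be an algebraically closed field of characteristic 2, let K = k(x) be the rational function field in one variable over k, and let ρ be a k-algebra automorphism of K of order 3 with fixed field J. Then there exist an element s ∈ K and a primitive cube root of unity ζ ∈ k such that K = k(s), ρ(s) = ζs, and J = k(s³). -/
open IntermediateField

/-- Every automorphism of `k(X)` maps `X` to a quotient of two polynomials of degree at most one. -/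
theorem RatFunc.exists_algEquiv_X_mul_eq {k : Type*} [Field k] (ρ : RatFunc k ≃ₐ[k] RatFunc k) :
    ∃ a b c d : k, (c ≠ 0 ∨ d ≠ 0) ∧
      ρ RatFunc.X * (RatFunc.C c * RatFunc.X + RatFunc.C d) =
        RatFunc.C a * RatFunc.X + RatFunc.C b := by
  have htop : k⟮ρ RatFunc.X⟯ = ⊤ := by
    have h := adjoin_map k {(RatFunc.X : RatFunc k)} ρ.toAlgHom
    rw [RatFunc.adjoin_X, Set.image_singleton] at h
    refine Eq.trans h.symm ?_
    rw [← AlgHom.fieldRange_eq_map]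
    exact AlgEquiv.fieldRange_eq_top ρ
  have hdeg := RatFunc.finrank_eq_max_natDegree (ρ RatFunc.X)
  rw [htop, IntermediateField.finrank_top] at hdeg
  obtain ⟨a, b, hab⟩ := Polynomial.exists_eq_X_add_C_of_natDegree_le_one
    (hdeg ▸ le_max_left _ _ : (ρ RatFunc.X).num.natDegree ≤ 1)
  obtain ⟨c, d, hcd⟩ := Polynomial.exists_eq_X_add_C_of_natDegree_le_one
    (hdeg ▸ le_max_right _ _ : (ρ RatFunc.X).denom.natDegree ≤ 1)
  refine ⟨a, b, c, d, ?_, ?_⟩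
  · by_contra! h
    exact (ρ RatFunc.X).denom_ne_zero (by simp [hcd, h.1, h.2])
  · have h := RatFunc.num_div_denom (ρ RatFunc.X)
    rw [div_eq_iff (RatFunc.algebraMap_ne_zero (RatFunc.denom_ne_zero _)), hab, hcd] at h
    simpa using h.symm

theorem RatFunc.X_ne_C {k : Type*} [Field k] (c : k) : (RatFunc.X : RatFunc k) ≠ RatFunc.C c := by
  intro h
  have := congrArg RatFunc.num h
  rw [RatFunc.num_X, RatFunc.num_C] at this
  exact Polynomial.X_ne_C c this

/-- Over an algebraically closed field, every automorphism of `k(X)` is affine with respect to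
some generator. -/
theorem RatFunc.exists_generator_algEquiv_affine {k : Type*} [Field k] [IsAlgClosed k]
    (ρ : RatFunc k ≃ₐ[k] RatFunc k) :
    ∃ (t : RatFunc k) (a b : k), k⟮t⟯ = ⊤ ∧ ρ t = RatFunc.C a * t + RatFunc.C b := by
  have hρC (c : k) : ρ (RatFunc.C c) = RatFunc.C c := ρ.commutes c
  obtain ⟨a, b, c, d, hcd, h⟩ := RatFunc.exists_algEquiv_X_mul_eq ρ
  by_cases hc : c = 0
  · have hd : d ≠ 0 := hcd.resolve_left (not_not_intro hc)
    refine ⟨RatFunc.X, a / d, b / d, RatFunc.adjoin_X, ?_⟩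
    have hd' : RatFunc.C d ≠ 0 := by simpa using hd
    rw [map_div₀, map_div₀]
    field_simp
    simpa [hc] using h
  · obtain ⟨β, hβ⟩ := IsAlgClosed.exists_root
      (Polynomial.C c * Polynomial.X ^ 2 + Polynomial.C (d - a) * Polynomial.X + Polynomial.C (-b))
      (by rw [Polynomial.degree_quadratic hc]; decide)
    have hβ' : b = c * β ^ 2 + (d - a) * β := by
      simp [Polynomial.IsRoot] at hβ
      linear_combination -hβ
    have hX : (RatFunc.X : RatFunc k) - RatFunc.C β ≠ 0 := sub_ne_zero.mpr (RatFunc.X_ne_C β)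
    have hy : ρ RatFunc.X - RatFunc.C β ≠ 0 := by
      have := (map_ne_zero ρ).mpr hX
      rwa [map_sub, hρC] at this
    have hmul : (ρ RatFunc.X - RatFunc.C β) * (RatFunc.C c * RatFunc.X + RatFunc.C d) =
        RatFunc.C (a - c * β) * (RatFunc.X - RatFunc.C β) := by
      rw [sub_mul, h, hβ']
      simp only [map_add, map_sub, map_mul, map_pow]
      ring
    have hden : RatFunc.C c * RatFunc.X + RatFunc.C d ≠ 0 := by
      intro h0
      refine RatFunc.X_ne_C (-d / c) ?_
      have hc' : RatFunc.C c ≠ 0 := by simpa using hc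
      rw [map_div₀, map_neg, eq_div_iff hc']
      linear_combination h0
    have hac : RatFunc.C (a - c * β) ≠ 0 := by
      intro h0
      rw [h0, zero_mul] at hmul
      exact mul_ne_zero hy hden hmul
    refine ⟨(RatFunc.X - RatFunc.C β)⁻¹, (c * β + d) / (a - c * β), c / (a - c * β), ?_, ?_⟩
    · rw [eq_top_iff, ← RatFunc.adjoin_X, adjoin_simple_le_iff]
      have ht := mem_adjoin_simple_self k ((RatFunc.X - RatFunc.C β : RatFunc k)⁻¹)
      have := add_mem (inv_mem ht) (IntermediateField.algebraMap_mem k⟮(RatFunc.X - RatFunc.C β : RatFunc k)⁻¹⟯ β)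
      rw [inv_inv, RatFunc.algebraMap_eq_C] at this
      simpa only [sub_add_cancel] using this
    · rw [map_inv₀, map_sub, hρC, map_div₀, map_div₀, map_add, map_mul]
      have : (ρ RatFunc.X - RatFunc.C β)⁻¹ = (RatFunc.C c * RatFunc.X + RatFunc.C d) /
          (RatFunc.C (a - c * β) * (RatFunc.X - RatFunc.C β)) := by
        rw [← hmul]
        field_simp
      rw [this]
      field_simp
      ring

theorem AlgEquiv.apply_eq_self_of_mem_adjoin_simple {k K : Type*} [Field k] [Field K]
    [Algebra k K] (ρ : K ≃ₐ[k] K) {s y : K} (hs : ρ s = s) (hy : y ∈ k⟮s⟯) : ρ y = y := by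
  have hle : k⟮s⟯ ≤ fixedField (Subgroup.zpowers ρ) := by
    rw [adjoin_simple_le_iff, mem_fixedField_iff]
    intro f hf
    exact (Subgroup.zpowers_le (H := MulAction.stabilizer _ s)).mpr hs hf
  exact (mem_fixedField_iff _ _).mp (hle hy) ρ (Subgroup.mem_zpowers ρ)

/-- If an algebra automorphism multiplies a generator `s` by a primitive cube root of unity, then
its fixed field is generated by `s ^ 3`. -/
theorem AlgEquiv.apply_eq_self_iff_mem_adjoin_pow_three {k K : Type*} [Field k] [Field K]
    [Algebra k K] (ρ : K ≃ₐ[k] K) {s : K} {ζ : k} (hζ : IsPrimitiveRoot ζ 3) (h3 : (3 : K) ≠ 0)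
    (hs : k⟮s⟯ = ⊤) (hρs : ρ s = algebraMap k K ζ * s) (x : K) :
    ρ x = x ↔ x ∈ k⟮s ^ 3⟯ := by
  have hfix : ∀ y ∈ k⟮s ^ 3⟯, ρ y = y := fun y ↦ ρ.apply_eq_self_of_mem_adjoin_simple <| by
    rw [map_pow, hρs, mul_pow, ← map_pow, hζ.pow_eq_one, map_one, one_mul]
  refine ⟨fun hx ↦ ?_, hfix x⟩
  set L := k⟮s ^ 3⟯
  set z := algebraMap k K ζ
  have hz : IsPrimitiveRoot z 3 := hζ.map_of_injective (algebraMap k K).injective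
  have hz3 : z ^ 3 = 1 := hz.pow_eq_one
  have hzsum : 1 + z + z ^ 2 = 0 := by
    simpa [Finset.sum_range_succ] using hz.geom_sum_eq_zero (by norm_num)
  have hρz : ρ z = z := ρ.commutes ζ
  let T : K →ₗ[k] K := LinearMap.id + ρ.toLinearMap + ρ.toLinearMap ∘ₗ ρ.toLinearMap
  have hT (y : K) : T y = y + ρ y + ρ (ρ y) := rfl
  have hTs (i : ℕ) : T (s ^ i) ∈ L := by
    have hval : T (s ^ i) = (1 + z ^ i + z ^ i * z ^ i) * s ^ i := by
      rw [hT]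
      simp only [map_pow, map_mul, hρs, hρz, mul_pow]
      ring
    obtain ⟨m, rfl | rfl | rfl⟩ : ∃ m, i = 3 * m ∨ i = 3 * m + 1 ∨ i = 3 * m + 2 :=
      ⟨i / 3, by omega⟩
    · rw [hval, pow_mul, pow_mul, hz3]
      refine mul_mem ?_ (pow_mem (mem_adjoin_simple_self k _) m)
      rw [one_pow, mul_one]
      exact add_mem (add_mem (one_mem _) (one_mem _)) (one_mem _)
    · rw [hval, pow_succ z, pow_mul z, hz3, one_pow,
        show 1 + 1 * z + 1 * z * (1 * z) = 1 + z + z ^ 2 by ring, hzsum, zero_mul]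
      exact zero_mem _
    · rw [hval, pow_add z, pow_mul z, hz3, one_pow,
        show 1 + 1 * z ^ 2 + 1 * z ^ 2 * (1 * z ^ 2) = 1 + z ^ 2 + z ^ 3 * z by ring, hz3,
        show 1 + z ^ 2 + 1 * z = 1 + z + z ^ 2 by ring, hzsum, zero_mul]
      exact zero_mem _
  have hint : IsIntegral L s :=
    IsIntegral.of_pow (n := 3) (by norm_num)
      (isIntegral_algebraMap (R := L) (x := ⟨s ^ 3, mem_adjoin_simple_self k _⟩))
  have hxs : x ∈ Algebra.adjoin L {s} := by
    rw [← adjoin_simple_toSubalgebra_of_isAlgebraic hint.isAlgebraic]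
    have : k⟮s⟯ ≤ (L⟮s⟯).restrictScalars k := by
      rw [adjoin_simple_le_iff]
      exact mem_adjoin_simple_self L s
    exact this (hs ▸ mem_top)
  have hTx : T x ∈ L := by
    rw [Algebra.adjoin_singleton_eq_range_aeval] at hxs
    obtain ⟨p, rfl⟩ := hxs
    change T (Polynomial.aeval s p) ∈ L
    rw [Polynomial.aeval_eq_sum_range, map_sum]
    refine sum_mem fun i _ ↦ ?_
    have : T (p.coeff i • s ^ i) = (p.coeff i : K) * T (s ^ i) := by
      rw [hT, hT, Algebra.smul_def, IntermediateField.algebraMap_apply]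
      simp only [map_mul, hfix _ (p.coeff i).2]
      ring
    rw [this]
    exact mul_mem (p.coeff i).2 (hTs i)
  have hx3 : x = (3 : K)⁻¹ * T x := by
    rw [hT, hx, hx]
    field_simp
    ring
  rw [hx3]
  exact mul_mem (inv_mem (ofNat_mem L 3)) hTx

/-- **Lemma.** If `k` is an algebraically closed field of characteristic 2, `K = k(x)` the
rational function field, and `ρ` a `k`-algebra automorphism of `K` of order 3 with fixed
field `J`, then there are `s ∈ K` and a primitive cube root of unity `ζ ∈ k` with
`K = k(s)`, `ρ s = ζ s` and `J = k(s³)`. -/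
theorem stmt_1 (k : Type) [Field k] [IsAlgClosed k] [CharP k 2]
    (ρ : RatFunc k ≃ₐ[k] RatFunc k) (hρ : orderOf ρ = 3) :
    ∃ (s : RatFunc k) (ζ : k),
      IsPrimitiveRoot ζ 3 ∧
      IntermediateField.adjoin k {s} = ⊤ ∧
      ρ s = RatFunc.C ζ * s ∧
      ∀ x : RatFunc k, ρ x = x ↔ x ∈ IntermediateField.adjoin k {s ^ 3} := by
  have h3 : (3 : k) ≠ 0 := by
    have : (2 : k) = 0 := CharTwo.two_eq_zero
    rw [show (3 : k) = 2 + 1 by norm_num, this, zero_add]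
    exact one_ne_zero
  have hρC (c : k) : ρ (RatFunc.C c) = RatFunc.C c := ρ.commutes c
  obtain ⟨t, a, b, ht, hρt⟩ := RatFunc.exists_generator_algEquiv_affine ρ
  have htC (c : k) : t ≠ RatFunc.C c := by
    intro h
    have hX : (RatFunc.X : RatFunc k) ∈ k⟮t⟯ := ht ▸ mem_top
    have hbot : k⟮t⟯ = ⊥ := adjoin_simple_eq_bot_iff.mpr (mem_bot.mpr ⟨c, h.symm⟩)
    obtain ⟨e, he⟩ := mem_bot.mp (hbot ▸ hX)
    exact RatFunc.X_ne_C e he.symm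
  have hcube : ρ (ρ (ρ t)) = t := by
    have := DFunLike.congr_fun (hρ ▸ pow_orderOf_eq_one ρ : ρ ^ 3 = 1) t
    simpa [pow_succ] using this
  have hiter : RatFunc.C (1 - a ^ 3) * t = RatFunc.C ((a ^ 2 + a + 1) * b) := by
    simp only [hρt, map_add, map_mul, hρC] at hcube
    simp only [map_add, map_sub, map_mul, map_pow, map_one]
    linear_combination -hcube
  have ha3 : a ^ 3 = 1 := by
    by_contra hne
    have hne' : 1 - a ^ 3 ≠ 0 := sub_ne_zero.mpr (Ne.symm hne)
    refine htC (((a ^ 2 + a + 1) * b) / (1 - a ^ 3)) ?_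
    rw [map_div₀, eq_div_iff (by simpa only [ne_eq, map_eq_zero] using hne'), mul_comm]
    exact hiter
  have ha1 : a ≠ 1 := by
    rintro rfl
    have hb : b = 0 := by
      have h0 : RatFunc.C (3 * b) = 0 := by
        rw [show 3 * b = (1 ^ 2 + 1 + 1) * b by ring, ← hiter]
        simp
      exact (mul_eq_zero.mp ((map_eq_zero _).mp h0)).resolve_left h3
    have hρ1 : ρ = 1 := by
      ext x
      exact ρ.apply_eq_self_of_mem_adjoin_simple (by simpa [hb] using hρt) (ht ▸ mem_top)
    rw [hρ1, orderOf_one] at hρ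
    omega
  have hζ : IsPrimitiveRoot a 3 :=
    IsPrimitiveRoot.iff_orderOf.mpr (orderOf_eq_prime ha3 ha1)
  have hs : k⟮t - RatFunc.C (b / (1 - a))⟯ = ⊤ := by
    rw [eq_top_iff, ← ht, adjoin_simple_le_iff]
    have := add_mem (mem_adjoin_simple_self k (t - RatFunc.C (b / (1 - a))))
      (IntermediateField.algebraMap_mem k⟮t - RatFunc.C (b / (1 - a))⟯ (b / (1 - a)))
    rw [RatFunc.algebraMap_eq_C] at this
    simpa only [sub_add_cancel] using this
  have hρs : ρ (t - RatFunc.C (b / (1 - a))) = RatFunc.C a * (t - RatFunc.C (b / (1 - a))) := by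
    have hb : b = (1 - a) * (b / (1 - a)) := by
      rw [mul_div_cancel₀ _ (sub_ne_zero.mpr ha1.symm)]
    have hb' := congrArg RatFunc.C hb
    rw [map_mul, map_sub, map_one] at hb'
    rw [map_sub, hρC, hρt]
    linear_combination hb'
  have h3' : (3 : RatFunc k) ≠ 0 := by
    have := (map_ne_zero (RatFunc.C (K := k))).mpr h3
    rwa [map_ofNat] at this
  exact ⟨_, a, hζ, hs, hρs, ρ.apply_eq_self_iff_mem_adjoin_pow_three hζ h3' hs hρs⟩
end

section
/- Let k be a field of characteristic 2 containing a primitive cube root of unity ζ, let K = k(s) be the rational function field over k and J = k(s³) ⊆ K. Let ψ ∈ k \ {0} and let e ≥ 1 be an integer. Then Tr_{K/J}((s − ψ)^{−e}) = F(s³)/(s³ − ψ³)^e for some polynomial F ∈ k[T] with F(ψ³) = ψ^{2e} ≠ 0; in particular, viewed as a rational function of the variable t = s³, the trace Tr_{K/J}((s − ψ)^{−e}) has a pole of order exactly e at t = ψ³. -/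
open Polynomial IntermediateField in
theorem RatFunc.finrank_adjoin_X_pow (k : Type*) [Field k] (n : ℕ) :
    Module.finrank k⟮(RatFunc.X : RatFunc k) ^ n⟯ (RatFunc k) = n := by
  rw [RatFunc.finrank_eq_max_natDegree]
  have h : (RatFunc.X : RatFunc k) ^ n = algebraMap k[X] (RatFunc k) (Polynomial.X ^ n) := by
    rw [map_pow, RatFunc.algebraMap_X]
  rw [h, RatFunc.num_algebraMap, RatFunc.denom_algebraMap]
  simp

/-- The substitution `X ↦ ζ X` fixes `k(Xⁿ)` if `ζ ^ n = 1`. -/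
theorem RatFunc.exists_algEquiv_X_eq_C_mul_X {k : Type*} [Field k] {n : ℕ} (hn : n ≠ 0) {ζ : k}
    (hζ : ζ ^ n = 1) :
    ∃ σ : RatFunc k ≃ₐ[IntermediateField.adjoin k {(RatFunc.X : RatFunc k) ^ n}] RatFunc k,
      σ RatFunc.X = RatFunc.C ζ * RatFunc.X := by
  have hζ0 : ζ ≠ 0 := by rintro rfl; simp [hn] at hζ
  have hf : Transcendental k (RatFunc.C ζ * RatFunc.X) := by
    refine RatFunc.transcendental_of_ne_C _ ?_
    rintro ⟨c, hc⟩
    have h : (Polynomial.C ζ * Polynomial.X : Polynomial k) = Polynomial.C c := by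
      apply RatFunc.algebraMap_injective k
      simpa using hc
    have h1 := congrArg (fun p => Polynomial.coeff p 1) h
    simp [Polynomial.coeff_C] at h1
    exact hζ0 h1
  let τ : RatFunc k →ₐ[k] RatFunc k :=
    (IntermediateField.val _).comp (RatFunc.algEquivOfTranscendental _ hf).toAlgHom
  have hτ : τ RatFunc.X = RatFunc.C ζ * RatFunc.X := by
    simp [τ]
  have hle : IntermediateField.adjoin k {(RatFunc.X : RatFunc k) ^ n} ≤
      IntermediateField.mk (AlgHom.equalizer τ (AlgHom.id k _))
        (fun x hx => by
          have hx' : τ x = x := hx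
          change τ x⁻¹ = x⁻¹
          rw [map_inv₀, hx']) := by
    rw [IntermediateField.adjoin_le_iff, Set.singleton_subset_iff]
    change τ (RatFunc.X ^ n) = RatFunc.X ^ n
    rw [map_pow, hτ, mul_pow, ← map_pow, hζ, map_one, one_mul]
  let τ' : RatFunc k →ₐ[IntermediateField.adjoin k {(RatFunc.X : RatFunc k) ^ n}] RatFunc k :=
    { τ.toRingHom with commutes' := fun r => hle r.2 }
  have : FiniteDimensional (IntermediateField.adjoin k {(RatFunc.X : RatFunc k) ^ n})
      (RatFunc k) :=
    Module.finite_of_finrank_pos (by rw [RatFunc.finrank_adjoin_X_pow k n]; omega)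
  exact ⟨AlgEquiv.ofBijective τ' (Algebra.IsAlgebraic.algHom_bijective τ'), hτ⟩

/-- The trace from `k(X)` to `k(Xⁿ)` of a monomial. -/
theorem RatFunc.trace_X_pow {k : Type*} [Field k] {n : ℕ} (hn : n ≠ 0) {ζ : k}
    (hζ : IsPrimitiveRoot ζ n) (m : ℕ) :
    ((Algebra.trace (IntermediateField.adjoin k {(RatFunc.X : RatFunc k) ^ n}) (RatFunc k)
      (RatFunc.X ^ m) : IntermediateField.adjoin k {(RatFunc.X : RatFunc k) ^ n}) : RatFunc k) =
      if n ∣ m then (n : RatFunc k) * RatFunc.X ^ m else 0 := by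
  split_ifs with h
  · obtain ⟨q, rfl⟩ := h
    let t : IntermediateField.adjoin k {(RatFunc.X : RatFunc k) ^ n} :=
      ⟨RatFunc.X ^ n, IntermediateField.mem_adjoin_simple_self k _⟩
    have h1 : (RatFunc.X : RatFunc k) ^ (n * q) = algebraMap _ (RatFunc k) (t ^ q) := by
      rw [pow_mul, map_pow]; rfl
    rw [h1, Algebra.trace_algebraMap, RatFunc.finrank_adjoin_X_pow k n, nsmul_eq_mul]
    rfl
  · obtain ⟨σ, hσ⟩ := RatFunc.exists_algEquiv_X_eq_C_mul_X hn hζ.pow_eq_one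
    have h1 := Algebra.trace_eq_of_algEquiv σ ((RatFunc.X : RatFunc k) ^ m)
    have h2 : σ (RatFunc.X ^ m) =
        algebraMap k (IntermediateField.adjoin k {(RatFunc.X : RatFunc k) ^ n}) (ζ ^ m) •
          (RatFunc.X : RatFunc k) ^ m := by
      rw [map_pow, hσ, mul_pow, ← map_pow, algebraMap_smul, RatFunc.smul_eq_C_mul]
    rw [h2, map_smul, smul_eq_mul, ← sub_eq_zero, ← sub_one_mul, mul_eq_zero, sub_eq_zero,
      ← map_one (algebraMap k _), (algebraMap k _).injective.eq_iff, hζ.pow_eq_one_iff_dvd] at h1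
    rw [h1.resolve_left h]
    rfl

theorem RatFunc.exists_trace_aeval_X_eq {k : Type*} [Field k] {ζ : k}
    (hζ : IsPrimitiveRoot ζ 3) (G : Polynomial k) :
    ∃ F : Polynomial k,
      ((Algebra.trace (IntermediateField.adjoin k {(RatFunc.X : RatFunc k) ^ 3}) (RatFunc k)
        (Polynomial.aeval RatFunc.X G) :
          IntermediateField.adjoin k {(RatFunc.X : RatFunc k) ^ 3}) : RatFunc k) =
        Polynomial.aeval ((RatFunc.X : RatFunc k) ^ 3) F ∧
      ∀ x : k, F.eval (x ^ 3) = G.eval x + G.eval (ζ * x) + G.eval (ζ ^ 2 * x) := by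
  induction G using Polynomial.induction_on' with
  | add p q hp hq =>
    obtain ⟨P, hP, hP'⟩ := hp
    obtain ⟨Q, hQ, hQ'⟩ := hq
    refine ⟨P + Q, ?_, fun x => ?_⟩
    · rw [map_add, map_add, map_add, ← hP, ← hQ]; rfl
    · simp only [Polynomial.eval_add, hP', hQ']; ring
  | monomial m a =>
    have h1 : Polynomial.aeval (RatFunc.X : RatFunc k) (Polynomial.monomial m a) =
        algebraMap k (IntermediateField.adjoin k {(RatFunc.X : RatFunc k) ^ 3}) a •
          (RatFunc.X : RatFunc k) ^ m := by
      rw [Polynomial.aeval_monomial, algebraMap_smul, Algebra.smul_def]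
    have h2 := RatFunc.trace_X_pow three_ne_zero hζ m
    rw [h1, map_smul, smul_eq_mul, MulMemClass.coe_mul, h2]
    split_ifs with h
    · obtain ⟨q, rfl⟩ := h
      refine ⟨Polynomial.monomial q (3 * a), ?_, fun x => ?_⟩
      · rw [Polynomial.aeval_monomial, ← pow_mul, map_mul, map_ofNat, Nat.cast_ofNat]
        change algebraMap k (RatFunc k) a * _ = _
        ring
      · have h3 : (ζ ^ 2) ^ (3 * q) = 1 := by
          rw [← pow_mul, mul_left_comm, pow_mul, hζ.pow_eq_one, one_pow]
        simp only [Polynomial.eval_monomial, mul_pow, h3, pow_mul ζ, hζ.pow_eq_one, one_pow,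
          ← pow_mul x]
        ring
    · refine ⟨0, by simp, fun x => ?_⟩
      have h3 : 1 + ζ ^ m + ζ ^ (2 * m) = 0 := by
        have h4 : ζ ^ m - 1 ≠ 0 := by rwa [Ne, sub_eq_zero, hζ.pow_eq_one_iff_dvd]
        apply mul_left_cancel₀ h4
        have h5 : (ζ ^ m) ^ 3 = 1 := by rw [← pow_mul, mul_comm, pow_mul, hζ.pow_eq_one, one_pow]
        linear_combination h5
      simp only [Polynomial.eval_monomial, Polynomial.eval_zero, mul_pow, ← pow_mul]
      linear_combination -(a * x ^ m) * h3

/-- **Lemma (trace of `(s - ψ)⁻ᵉ` for `k(s)/k(s³)` in characteristic 2).** -/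
theorem stmt_3 (k : Type) [Field k] [CharP k 2] (ζ : k) (hζ : IsPrimitiveRoot ζ 3)
    (J : IntermediateField k (RatFunc k))
    (hJ : J = IntermediateField.adjoin k {RatFunc.X ^ 3})
    (ψ : k) (hψ : ψ ≠ 0) (e : ℕ) (he : 1 ≤ e) :
    ∃ F : Polynomial k,
      ((Algebra.trace ↥J (RatFunc k) (((RatFunc.X - RatFunc.C ψ) ^ e)⁻¹) : ↥J) : RatFunc k) =
        Polynomial.aeval ((RatFunc.X : RatFunc k) ^ 3) F /
          ((RatFunc.X : RatFunc k) ^ 3 - RatFunc.C (ψ ^ 3)) ^ e ∧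
      Polynomial.eval (ψ ^ 3) F = ψ ^ (2 * e) ∧
      ψ ^ (2 * e) ≠ 0 := by
  subst hJ
  let G : Polynomial k :=
    (Polynomial.X ^ 2 + Polynomial.C ψ * Polynomial.X + Polynomial.C (ψ ^ 2)) ^ e
  obtain ⟨F, hF, hF'⟩ := RatFunc.exists_trace_aeval_X_eq hζ G
  refine ⟨F, ?_, ?_, pow_ne_zero _ hψ⟩
  · let d : IntermediateField.adjoin k {(RatFunc.X : RatFunc k) ^ 3} :=
      (⟨RatFunc.X ^ 3, IntermediateField.mem_adjoin_simple_self k _⟩ - algebraMap k _ (ψ ^ 3)) ^ e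
    have hd : (d : RatFunc k) = (RatFunc.X ^ 3 - RatFunc.C (ψ ^ 3)) ^ e := rfl
    have hG : Polynomial.aeval (RatFunc.X : RatFunc k) G =
        (RatFunc.X ^ 2 + RatFunc.C ψ * RatFunc.X + RatFunc.C ψ ^ 2) ^ e := by
      simp [G]
    have hne (p : Polynomial k) (hp : p.Monic) : algebraMap (Polynomial k) (RatFunc k) p ≠ 0 :=
      RatFunc.algebraMap_ne_zero hp.ne_zero
    have h1 := hne _ (Polynomial.monic_X_sub_C ψ)
    have h3 := hne _ (Polynomial.monic_X_pow_sub_C (ψ ^ 3) three_ne_zero)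
    simp only [map_sub, map_pow, RatFunc.algebraMap_X, RatFunc.algebraMap_C] at h1 h3
    have h : (((RatFunc.X : RatFunc k) - RatFunc.C ψ) ^ e)⁻¹ =
        d⁻¹ • Polynomial.aeval (RatFunc.X : RatFunc k) G := by
      rw [IntermediateField.smul_def, smul_eq_mul, IntermediateField.coe_inv, hd, hG, map_pow,
        inv_mul_eq_div, eq_div_iff (pow_ne_zero _ h3), inv_mul_eq_iff_eq_mul₀ (pow_ne_zero _ h1),
        ← mul_pow]
      congr 1
      ring
    rw [h, map_smul, smul_eq_mul, MulMemClass.coe_mul, hF, IntermediateField.coe_inv, hd,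
      inv_mul_eq_div]
  · have hz : 1 + ζ + ζ ^ 2 = 0 := by
      have h4 : ζ - 1 ≠ 0 := sub_ne_zero.2 (hζ.ne_one (by norm_num))
      apply mul_left_cancel₀ h4
      linear_combination hζ.pow_eq_one
    have h2 : (2 : k) = 0 := CharTwo.two_eq_zero
    have e1 : ψ ^ 2 + ψ * ψ + ψ ^ 2 = ψ ^ 2 := by linear_combination ψ ^ 2 * h2
    have e2 : (ζ * ψ) ^ 2 + ψ * (ζ * ψ) + ψ ^ 2 = 0 := by linear_combination ψ ^ 2 * hz
    have e3 : (ζ ^ 2 * ψ) ^ 2 + ψ * (ζ ^ 2 * ψ) + ψ ^ 2 = 0 := by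
      linear_combination ψ ^ 2 * hz + ψ ^ 2 * ζ * hζ.pow_eq_one
    rw [hF']
    simp only [G, Polynomial.eval_pow, Polynomial.eval_add, Polynomial.eval_mul,
      Polynomial.eval_X, Polynomial.eval_C, e1, e2, e3]
    rw [zero_pow (by omega), add_zero, add_zero, pow_mul]
end

section
/- Let k be an algebraically closed field of characteristic 2 and ζ ∈ k a primitive cube root of unity. Let G = A₄ = ⟨σ, ρ : σ² = ρ³ = (σρ)³ = 1⟩, set τ := ρσρ⁻¹, and let H = ⟨σ, τ⟩ be the unique Sylow 2-subgroup of G. For n ≥ 1 and φ ∈ k let V_φ be the 2n-dimensional representation of H over k given in block form by σ ↦ [[I_n, ζ(I_n + J_n(φ))], [0, I_n]] and τ ↦ [[I_n, ζ²I_n + J_n(φ)], [0, I_n]]. Then for every φ ∈ k \ {0}, the restriction to H of the induced representation satisfies Res_H^G (Ind_H^G V_φ) ≅ V_φ ⊕ V_{ζφ} ⊕ V_{ζ²φ} as representations of H over k. -/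
/-- The `n × n` upper-triangular Jordan block over `k` with eigenvalue `lam`. -/
def jordanBlock (k : Type) [Field k] (n : ℕ) (lam : k) : Matrix (Fin n) (Fin n) k :=
  Matrix.of fun i j => if i = j then lam else if (i : ℕ) + 1 = (j : ℕ) then 1 else 0

/-- `J_n(cφ)` and `c J_n(φ)` are conjugate by the diagonal matrix with entries `c⁻ⁱ`. -/
lemma diagonal_mul_jordanBlock {k : Type} [Field k] (n : ℕ) {c : k} (hc : c ≠ 0) (φ : k) :
    Matrix.diagonal (fun i : Fin n => c⁻¹ ^ (i : ℕ)) * jordanBlock k n (c * φ) =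
      c • (jordanBlock k n φ * Matrix.diagonal (fun i : Fin n => c⁻¹ ^ (i : ℕ))) := by
  ext i j
  rw [Matrix.diagonal_mul, Matrix.smul_apply, Matrix.mul_diagonal, smul_eq_mul]
  simp only [jordanBlock, Matrix.of_apply]
  split_ifs with h1 h2
  · subst h1
    ring
  · rw [← h2, pow_succ]
    field_simp
  · simp

/-- A matrix `D` with `X D = a D Y` gives a block-diagonal intertwiner between the unipotent
matrices with upper right blocks `X` and `Y`. -/
lemma fromBlocks_one_mul_fromBlocks_diag {k m : Type} [Field k] [Fintype m] [DecidableEq m]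
    (a : k) (D X Y : Matrix m m k) (h : X * D = a • (D * Y)) :
    Matrix.fromBlocks 1 X 0 1 * Matrix.fromBlocks (a • D) 0 0 D =
      Matrix.fromBlocks (a • D) 0 0 D * Matrix.fromBlocks 1 Y 0 1 := by
  simp [Matrix.fromBlocks_multiply, h]

lemma exists_linearEquiv_intertwining {k m : Type} [Field k] [Fintype m] [DecidableEq m]
    {a : k} (ha : a ≠ 0) (D : Matrix m m k) (hD : IsUnit D) (X X' Y Y' : Matrix m m k)
    (h : X * D = a • (D * Y)) (h' : X' * D = a • (D * Y')) :
    ∃ P : (m ⊕ m → k) ≃ₗ[k] (m ⊕ m → k),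
      (∀ v, Matrix.toLin' (Matrix.fromBlocks 1 X 0 1) (P v) =
        P (Matrix.toLin' (Matrix.fromBlocks 1 Y 0 1) v)) ∧
      (∀ v, Matrix.toLin' (Matrix.fromBlocks 1 X' 0 1) (P v) =
        P (Matrix.toLin' (Matrix.fromBlocks 1 Y' 0 1) v)) := by
  have hdet : IsUnit (Matrix.fromBlocks (a • D) 0 0 D).det := by
    rw [Matrix.det_fromBlocks_zero₂₁, Matrix.det_smul]
    have := (Matrix.isUnit_iff_isUnit_det D).1 hD
    exact ((ha.isUnit.pow _).mul this).mul this
  refine ⟨Matrix.toLinearEquiv' _ ((Matrix.isUnit_iff_isUnit_det _).2 hdet).invertible,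
    fun v => ?_, fun v => ?_⟩
  · have := fromBlocks_one_mul_fromBlocks_diag a D X Y h
    have := congrArg (fun M => Matrix.toLin' M v) this
    rwa [Matrix.toLin'_mul, Matrix.toLin'_mul] at this
  · have := fromBlocks_one_mul_fromBlocks_diag a D X' Y' h'
    have := congrArg (fun M => Matrix.toLin' M v) this
    rwa [Matrix.toLin'_mul, Matrix.toLin'_mul] at this

/-- The sum map from `X × X × X` is bijective if its components are injective and have ranges
forming an internal direct sum. -/
lemma bijective_coprod_of_isInternal {k X W : Type} [Field k] [AddCommGroup X] [Module k X]
    [FiniteDimensional k X] [AddCommGroup W] [Module k W] (g : Fin 3 → X →ₗ[k] W)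
    (hg : ∀ i, Function.Injective (g i))
    (hint : DirectSum.IsInternal fun i => LinearMap.range (g i)) :
    Function.Bijective ((g 0).coprod ((g 2).coprod (g 1))) := by
  have hsurj : Function.Surjective ((g 0).coprod ((g 2).coprod (g 1))) := by
    rw [← LinearMap.range_eq_top, eq_top_iff, ← hint.submodule_iSup_eq_top, iSup_le_iff]
    rintro i _ ⟨x, rfl⟩
    fin_cases i
    · exact ⟨(x, 0, 0), by simp⟩
    · exact ⟨(0, 0, x), by simp⟩
    · exact ⟨(0, x, 0), by simp⟩
  have : FiniteDimensional k W := Module.Finite.of_surjective _ hsurj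
  have e := LinearEquiv.ofBijective (DirectSum.coeLinearMap fun i => LinearMap.range (g i)) hint
  have hdim : Module.finrank k (X × X × X) = Module.finrank k W := by
    rw [← e.finrank_eq, Module.finrank_directSum, Fin.sum_univ_three,
      LinearMap.finrank_range_of_inj (hg 0), LinearMap.finrank_range_of_inj (hg 1),
      LinearMap.finrank_range_of_inj (hg 2), Module.finrank_prod, Module.finrank_prod, add_assoc]
  exact ⟨(LinearMap.injective_iff_surjective_of_finrank_eq_finrank hdim).2 hsurj, hsurj⟩

/-- **Lemma.** Let `G = A₄ = ⟨σ, ρ⟩`, `τ = ρσρ⁻¹`, `H = ⟨σ, τ⟩` its Sylow 2-subgroup.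
For `φ ≠ 0`, let `V_φ` be the `2n`-dimensional representation of `H` given by the stated
block matrices.  If `U` is any `G`-representation realizing the induced module
`Ind_H^G V_φ` — i.e. there is an injective `H`-equivariant embedding `ι : V_φ → U` whose
`ρ`-translates `ι(V_φ), ρ·ι(V_φ), ρ²·ι(V_φ)` give an internal direct sum decomposition
of `U` — then `Res_H^G U ≅ V_φ ⊕ V_{ζφ} ⊕ V_{ζ²φ}` as representations of `H`. -/
theorem stmt_12 (k : Type) [Field k] [IsAlgClosed k] [CharP k 2]
    (ζ : k) (hζ : IsPrimitiveRoot ζ 3)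
    (G : Type) [Group G] (σ ρ : G)
    (hσ : σ ^ 2 = 1) (hρ : ρ ^ 3 = 1) (hσρ : (σ * ρ) ^ 3 = 1)
    (hcard : Nat.card G = 12) (hgen : Subgroup.closure {σ, ρ} = ⊤)
    (τ : G) (hτ : τ = ρ * σ * ρ⁻¹)
    (H : Subgroup G) (hH : H = Subgroup.closure {σ, τ})
    (hσH : σ ∈ H) (hτH : τ ∈ H)
    (n : ℕ) (hn : 1 ≤ n) (φ : k) (hφ : φ ≠ 0)
    -- the representations V_φ, V_{ζφ}, V_{ζ²φ} of H
    (V1 V2 V3 : Representation k ↥H (Fin n ⊕ Fin n → k))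
    (hV1σ : V1 ⟨σ, hσH⟩ =
      Matrix.toLin' (Matrix.fromBlocks 1 (ζ • (1 + jordanBlock k n φ)) 0 1))
    (hV1τ : V1 ⟨τ, hτH⟩ =
      Matrix.toLin' (Matrix.fromBlocks 1
        (ζ ^ 2 • (1 : Matrix (Fin n) (Fin n) k) + jordanBlock k n φ) 0 1))
    (hV2σ : V2 ⟨σ, hσH⟩ =
      Matrix.toLin' (Matrix.fromBlocks 1 (ζ • (1 + jordanBlock k n (ζ * φ))) 0 1))
    (hV2τ : V2 ⟨τ, hτH⟩ =
      Matrix.toLin' (Matrix.fromBlocks 1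
        (ζ ^ 2 • (1 : Matrix (Fin n) (Fin n) k) + jordanBlock k n (ζ * φ)) 0 1))
    (hV3σ : V3 ⟨σ, hσH⟩ =
      Matrix.toLin' (Matrix.fromBlocks 1 (ζ • (1 + jordanBlock k n (ζ ^ 2 * φ))) 0 1))
    (hV3τ : V3 ⟨τ, hτH⟩ =
      Matrix.toLin' (Matrix.fromBlocks 1
        (ζ ^ 2 • (1 : Matrix (Fin n) (Fin n) k) + jordanBlock k n (ζ ^ 2 * φ)) 0 1))
    -- a G-representation U realizing Ind_H^G V_φ
    (W : Type) [AddCommGroup W] [Module k W]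
    (U : Representation k G W)
    (ι : (Fin n ⊕ Fin n → k) →ₗ[k] W)
    (hinj : Function.Injective ι)
    (hequiv : ∀ (h : ↥H) (v : Fin n ⊕ Fin n → k), ι (V1 h v) = U (h : G) (ι v))
    (hint : DirectSum.IsInternal fun i : Fin 3 =>
      Submodule.map (U ρ ^ (i : ℕ)) (LinearMap.range ι)) :
    -- conclusion: Res_H^G U ≅ V_φ ⊕ V_{ζφ} ⊕ V_{ζ²φ}
    ∃ e : W ≃ₗ[k] ((Fin n ⊕ Fin n → k) × (Fin n ⊕ Fin n → k) × (Fin n ⊕ Fin n → k)),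
      ∀ (h : ↥H) (w : W),
        e (U (h : G) w) = (V1 h (e w).1, V2 h (e w).2.1, V3 h (e w).2.2) := by
  have h20 : (2 : k) = 0 := CharTwo.two_eq_zero
  have hζ3 : ζ ^ 3 = 1 := hζ.pow_eq_one
  have hζ0 : ζ ≠ 0 := hζ.ne_zero (by norm_num)
  have hζs : ζ ^ 2 + ζ + 1 = 0 := by
    have h1 : ζ - 1 ≠ 0 := sub_ne_zero.2 (hζ.ne_one (by norm_num))
    apply mul_left_cancel₀ h1
    linear_combination hζ3
  have hστ : V1 (⟨τ, hτH⟩ * ⟨σ, hσH⟩) = Matrix.toLin' (Matrix.fromBlocks 1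
      (1 + ζ ^ 2 • jordanBlock k n φ) 0 1) := by
    rw [map_mul, hV1σ, hV1τ, Module.End.mul_eq_comp, ← Matrix.toLin'_mul,
      Matrix.fromBlocks_multiply]
    congr 2
    · simp
    · ext i j
      simp only [Matrix.one_mul, Matrix.mul_one, Matrix.add_apply, Matrix.smul_apply, smul_eq_mul]
      linear_combination ((1 : Matrix (Fin n) (Fin n) k) i j + jordanBlock k n φ i j) * hζs
        - ((1 : Matrix (Fin n) (Fin n) k) i j + ζ ^ 2 * jordanBlock k n φ i j) * h20
    · simp
    · simp
  have hD : ∀ c : k, c ≠ 0 →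
      IsUnit (Matrix.diagonal (fun i : Fin n => c⁻¹ ^ (i : ℕ))) := fun c hc => by
    rw [Matrix.isUnit_iff_isUnit_det, Matrix.det_diagonal, isUnit_iff_ne_zero]
    exact Finset.prod_ne_zero_iff.2 fun i _ => pow_ne_zero _ (inv_ne_zero hc)
  obtain ⟨P₂, hP₂σ, hP₂τ⟩ := exists_linearEquiv_intertwining hζ0 _ (hD ζ hζ0)
    (ζ ^ 2 • (1 : Matrix (Fin n) (Fin n) k) + jordanBlock k n φ)
    (1 + ζ ^ 2 • jordanBlock k n φ)
    (ζ • (1 + jordanBlock k n (ζ * φ)))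
    (ζ ^ 2 • (1 : Matrix (Fin n) (Fin n) k) + jordanBlock k n (ζ * φ))
    (by
      simp only [Matrix.mul_add, Matrix.add_mul, Matrix.mul_smul, Matrix.smul_mul, smul_add,
        diagonal_mul_jordanBlock n hζ0, smul_smul, Matrix.one_mul, Matrix.mul_one]
      congr 1
      · congr 1; ring
      · rw [show ζ * (ζ * ζ) = 1 by rw [← hζ3]; ring, one_smul])
    (by
      simp only [Matrix.mul_add, Matrix.add_mul, Matrix.mul_smul, Matrix.smul_mul, smul_add,
        diagonal_mul_jordanBlock n hζ0, smul_smul, Matrix.one_mul, Matrix.mul_one]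
      congr 1
      · rw [show ζ * ζ ^ 2 = 1 by rw [← hζ3]; ring, one_smul]
      · congr 1; ring)
  have hζ2 : ζ ^ 2 ≠ 0 := pow_ne_zero 2 hζ0
  obtain ⟨P₃, hP₃σ, hP₃τ⟩ := exists_linearEquiv_intertwining hζ2 _ (hD (ζ ^ 2) hζ2)
    (1 + ζ ^ 2 • jordanBlock k n φ)
    (ζ • (1 + jordanBlock k n φ))
    (ζ • (1 + jordanBlock k n (ζ ^ 2 * φ)))
    (ζ ^ 2 • (1 : Matrix (Fin n) (Fin n) k) + jordanBlock k n (ζ ^ 2 * φ))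
    (by
      simp only [Matrix.mul_add, Matrix.add_mul, Matrix.mul_smul, Matrix.smul_mul, smul_add,
        diagonal_mul_jordanBlock n hζ2, smul_smul, Matrix.one_mul, Matrix.mul_one]
      congr 1
      · rw [show ζ ^ 2 * ζ = 1 by rw [← hζ3]; ring, one_smul]
      · congr 1; linear_combination (-ζ ^ 2) * hζ3)
    (by
      simp only [Matrix.mul_add, Matrix.add_mul, Matrix.mul_smul, Matrix.smul_mul, smul_add,
        diagonal_mul_jordanBlock n hζ2, smul_smul, Matrix.one_mul, Matrix.mul_one]
      congr 1
      · congr 1; linear_combination (-ζ) * hζ3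
      · congr 1; linear_combination (-ζ) * hζ3)
  rw [← hV1τ, ← hV2σ] at hP₂σ
  rw [← hστ, ← hV2τ] at hP₂τ
  rw [← hστ, ← hV3σ] at hP₃σ
  rw [← hV1σ, ← hV3τ] at hP₃τ
  have hρρ : ρ * ρ = ρ⁻¹ := by
    rw [eq_inv_iff_mul_eq_one, ← hρ]; simp [pow_succ]
  have conj_τ : τ * ρ = ρ * σ := by rw [hτ]; group
  have conj_σ : σ * ρ = ρ * (τ * σ) := by
    have h1 : σ⁻¹ = σ := by rw [inv_eq_iff_mul_eq_one, ← pow_two, hσ]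
    have h3 : σ * ρ * (σ * ρ) = ρ⁻¹ * σ := by
      rw [← h1, ← mul_inv_rev, h1, eq_inv_iff_mul_eq_one, ← hσρ]; simp [pow_succ]
    rw [← eq_mul_inv_iff_mul_eq, mul_inv_rev, h1] at h3
    rw [h3, hτ]
    simp only [← mul_assoc, hρρ]
  have hUρ : Function.Injective (U ρ) := fun x y h => by
    simpa [← Module.End.mul_apply, ← map_mul] using congrArg (U ρ⁻¹) h
  let g : Fin 3 → (Fin n ⊕ Fin n → k) →ₗ[k] W :=
    ![ι, (U ρ ∘ₗ ι) ∘ₗ P₃.toLinearMap, (U ρ ∘ₗ U ρ ∘ₗ ι) ∘ₗ P₂.toLinearMap]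
  have hg : ∀ i, Function.Injective (g i) := fun i => by
    fin_cases i
    · exact hinj
    · exact (hUρ.comp hinj).comp P₃.injective
    · exact (hUρ.comp (hUρ.comp hinj)).comp P₂.injective
  have hrange : (fun i : Fin 3 => Submodule.map (U ρ ^ (i : ℕ)) (LinearMap.range ι)) =
      fun i => LinearMap.range (g i) := by
    funext i
    fin_cases i
    · simp [g, Module.End.one_eq_id]
    · simp [g, LinearMap.range_comp]
    · simp [g, LinearMap.range_comp, pow_two, Module.End.mul_eq_comp, Submodule.map_comp]
  rw [hrange] at hint
  have hbij := bijective_coprod_of_isInternal g hg hint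
  let E := LinearEquiv.ofBijective _ hbij
  have hE : ∀ v, E v = ι v.1 + (U ρ (U ρ (ι (P₂ v.2.1))) + U ρ (ι (P₃ v.2.2))) := fun v => rfl
  have hU : ∀ a b w, U a (U b w) = U (a * b) w := fun a b w => by
    rw [map_mul, Module.End.mul_apply]
  have conj_sq_τ : τ * (ρ * ρ) = ρ * (ρ * (τ * σ)) := by
    rw [← conj_σ, ← mul_assoc, conj_τ, mul_assoc]
  have conj_sq_σ : σ * (ρ * ρ) = ρ * (ρ * τ) := by
    rw [← mul_assoc ρ ρ τ, hρρ, hτ]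
    group
  have keyσ : ∀ v, U σ (E v) =
      E (V1 ⟨σ, hσH⟩ v.1, V2 ⟨σ, hσH⟩ v.2.1, V3 ⟨σ, hσH⟩ v.2.2) := fun v => by
    simp only [hE, map_add, ← hP₂σ, ← hP₃σ, hequiv]
    simp only [hU, Subgroup.coe_mul, conj_σ, conj_sq_σ]
  have keyτ : ∀ v, U τ (E v) =
      E (V1 ⟨τ, hτH⟩ v.1, V2 ⟨τ, hτH⟩ v.2.1, V3 ⟨τ, hτH⟩ v.2.2) := fun v => by
    simp only [hE, map_add, ← hP₂τ, ← hP₃τ, hequiv]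
    simp only [hU, Subgroup.coe_mul, conj_τ, conj_sq_τ]
  have key : ∀ (h : G) (hh : h ∈ H) (v), U h (E v) =
      E (V1 ⟨h, hh⟩ v.1, V2 ⟨h, hh⟩ v.2.1, V3 ⟨h, hh⟩ v.2.2) := by
    clear_value E
    subst hH
    intro h hh
    induction hh using Subgroup.closure_induction with
    | mem x hx =>
      rcases hx with rfl | rfl
      · exact keyσ
      · exact keyτ
    | one =>
      intro v
      have h1 : (⟨1, one_mem _⟩ : Subgroup.closure {σ, τ}) = 1 := rfl
      simp [h1]
    | mul x y hx hy ihx ihy =>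
      intro v
      have h1 : (⟨x * y, mul_mem hx hy⟩ : Subgroup.closure {σ, τ}) = ⟨x, hx⟩ * ⟨y, hy⟩ := rfl
      rw [← hU, ihy, ihx, h1]
      simp only [map_mul, Module.End.mul_apply]
    | inv x hx ih =>
      intro v
      have h1 : (⟨x⁻¹, inv_mem hx⟩ : Subgroup.closure {σ, τ}) = ⟨x, hx⟩⁻¹ := rfl
      have h2 := ih (V1 ⟨x, hx⟩⁻¹ v.1, V2 ⟨x, hx⟩⁻¹ v.2.1, V3 ⟨x, hx⟩⁻¹ v.2.2)
      simp only [← Module.End.mul_apply, ← map_mul, mul_inv_cancel, map_one,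
        Module.End.one_apply] at h2
      rw [h1, ← h2, hU, inv_mul_cancel, map_one, Module.End.one_apply]
  refine ⟨E.symm, fun h w => ?_⟩
  rw [LinearEquiv.symm_apply_eq, ← key h h.2, LinearEquiv.apply_symm_apply]
end

section
/- Let k be an algebraically closed field of characteristic 2 and ζ ∈ k a primitive cube root of unity. Let G = A₄ = ⟨σ, ρ : σ² = ρ³ = (σρ)³ = 1⟩, set τ := ρσρ⁻¹, and let H = ⟨σ, τ⟩ be the unique Sylow 2-subgroup of G. For n ≥ 1 and φ ∈ k let V_φ be the 2n-dimensional representation of H over k given in block form by σ ↦ [[I_n, ζ(I_n + J_n(φ))], [0, I_n]] and τ ↦ [[I_n, ζ²I_n + J_n(φ)], [0, I_n]]. If φ, ψ ∈ k \ {0} satisfy φ³ = ψ³, then Ind_H^G V_φ ≅ Ind_H^G V_ψ as representations of G over k. -/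
open Matrix in
/-- The matrix of `σ` on `V_φ`. -/
def sigmaBlock (k : Type) [Field k] (ζ : k) (n : ℕ) (φ : k) :
    Matrix (Fin n ⊕ Fin n) (Fin n ⊕ Fin n) k :=
  fromBlocks 1 (ζ • (1 + jordanBlock k n φ)) 0 1

open Matrix in
/-- The matrix of `τ` on `V_φ`. -/
def tauBlock (k : Type) [Field k] (ζ : k) (n : ℕ) (φ : k) :
    Matrix (Fin n ⊕ Fin n) (Fin n ⊕ Fin n) k :=
  fromBlocks 1 (ζ ^ 2 • (1 : Matrix (Fin n) (Fin n) k) + jordanBlock k n φ) 0 1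

/-- `U` is induced from a representation on `X` in which `σ` acts by `S` and `ρσρ⁻¹` by `T`. -/
def IsInducedFrom {k G W X : Type} [Field k] [Group G] [AddCommGroup W] [Module k W]
    [AddCommGroup X] [Module k X] (U : Representation k G W) (σ ρ : G) (S T : X →ₗ[k] X) : Prop :=
  ∃ ι : X →ₗ[k] W, (∀ v, U σ (ι v) = ι (S v)) ∧ (∀ v, U (ρ * σ * ρ⁻¹) (ι v) = ι (T v)) ∧
    Function.Bijective fun x : Fin 3 → X => ∑ i : Fin 3, (U ρ ^ (i : ℕ)) (ι (x i))

lemma bijective_sum_of_isInternal {k W X : Type} [Field k] [AddCommGroup W] [Module k W]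
    [AddCommGroup X] [Module k X] (R : W →ₗ[k] W) (hR : Function.Injective R)
    (ι : X →ₗ[k] W) (hι : Function.Injective ι)
    (hint : DirectSum.IsInternal fun i : Fin 3 => Submodule.map (R ^ (i : ℕ)) (LinearMap.range ι)) :
    Function.Bijective fun x : Fin 3 → X => ∑ i : Fin 3, (R ^ (i : ℕ)) (ι (x i)) := by
  have hmem : ∀ (i : Fin 3) (x : X),
      ((R ^ (i : ℕ)) ∘ₗ ι) x ∈ Submodule.map (R ^ (i : ℕ)) (LinearMap.range ι) :=
    fun i x => ⟨ι x, ⟨x, rfl⟩, rfl⟩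
  let E : ∀ i : Fin 3, X ≃ₗ[k] Submodule.map (R ^ (i : ℕ)) (LinearMap.range ι) := fun i =>
    LinearEquiv.ofBijective (((R ^ (i : ℕ)) ∘ₗ ι).codRestrict _ (hmem i)) <| by
      constructor
      · intro x y hxy
        have h : (R ^ (i : ℕ)) (ι x) = (R ^ (i : ℕ)) (ι y) := congrArg Subtype.val hxy
        rw [Module.End.pow_apply, Module.End.pow_apply] at h
        exact hι (hR.iterate _ h)
      · rintro ⟨_, _, ⟨x, rfl⟩, rfl⟩
        exact ⟨x, rfl⟩
  let F := (LinearEquiv.piCongrRight E).trans ((DirectSum.linearEquivFunOnFintype k (Fin 3)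
    fun i => Submodule.map (R ^ (i : ℕ)) (LinearMap.range ι)).symm.trans
      (LinearEquiv.ofBijective (DirectSum.coeLinearMap _) hint))
  convert F.bijective using 1
  funext x
  have hdec : ∀ y : ∀ i : Fin 3, Submodule.map (R ^ (i : ℕ)) (LinearMap.range ι),
      (DirectSum.linearEquivFunOnFintype k (Fin 3)
        fun i => Submodule.map (R ^ (i : ℕ)) (LinearMap.range ι)).symm y =
      ∑ i, DirectSum.lof k (Fin 3)
        (fun i => Submodule.map (R ^ (i : ℕ)) (LinearMap.range ι)) i (y i) := by
    intro y
    rw [LinearEquiv.symm_apply_eq, map_sum]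
    simp only [DirectSum.linearEquivFunOnFintype_lof]
    exact (Finset.univ_sum_single y).symm
  simp only [F, LinearEquiv.trans_apply, hdec, map_sum]
  refine Finset.sum_congr rfl fun i _ => ?_
  exact (DirectSum.coeLinearMap_lof
    (fun i : Fin 3 => Submodule.map (R ^ (i : ℕ)) (LinearMap.range ι)) i (E i (x i))).symm

lemma conj_tau_eq {G : Type} [Group G] {σ ρ : G} (hσ : σ ^ 2 = 1) (hρ : ρ ^ 3 = 1)
    (hσρ : (σ * ρ) ^ 3 = 1) : ρ * (ρ * σ * ρ⁻¹) * ρ⁻¹ = ρ * σ * ρ⁻¹ * σ := by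
  have hσ' : σ⁻¹ = σ := inv_eq_of_mul_eq_one_left (by rwa [← sq])
  have hρ' : ρ⁻¹ = ρ * ρ := inv_eq_of_mul_eq_one_left (by rw [← hρ, pow_succ, pow_two])
  have h : σ * (ρ * σ * ρ⁻¹) * (ρ * (ρ * σ * ρ⁻¹) * ρ⁻¹) = 1 := by
    calc _ = (σ * ρ) ^ 3 * (ρ ^ 3)⁻¹ := by simp [pow_succ, mul_assoc]
      _ = 1 := by rw [hσρ, hρ]; simp
  rw [eq_inv_of_mul_eq_one_right h]
  simp [hσ', mul_assoc]

namespace IsInducedFrom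

variable {k G W X : Type} [Field k] [Group G] [AddCommGroup W] [Module k W]
  [AddCommGroup X] [Module k X] {U : Representation k G W} {σ ρ : G} {S T : X →ₗ[k] X}

/-- Conjugating by `ρ` changes the inducing representation but not the induced one. -/
lemma twist {S' T' : X →ₗ[k] X} (hσ : σ ^ 2 = 1) (hρ : ρ ^ 3 = 1) (hσρ : (σ * ρ) ^ 3 = 1)
    (P : X ≃ₗ[k] X) (hS : ∀ v, T (P v) = P (S' v)) (hT : ∀ v, T (S (P v)) = P (T' v))
    (h : IsInducedFrom U σ ρ S T) : IsInducedFrom U σ ρ S' T' := by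
  obtain ⟨ι, h1, h2, h3⟩ := h
  have hmul : ∀ (a b : G) (w : W), U a (U b w) = U (a * b) w := fun a b w => by
    rw [map_mul, Module.End.mul_apply]
  have hρ' : ρ ^ 2 = ρ⁻¹ := eq_inv_of_mul_eq_one_left (by rw [← hρ]; group)
  refine ⟨(U (ρ ^ 2)) ∘ₗ ι ∘ₗ P.toLinearMap, fun v => ?_, fun v => ?_, ?_⟩
  · have : σ * ρ ^ 2 = ρ ^ 2 * (ρ * σ * ρ⁻¹) := by rw [hρ']; group
    simp only [LinearMap.comp_apply, LinearEquiv.coe_coe]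
    rw [hmul, this, ← hmul, h2, hS]
  · have : ρ * σ * ρ⁻¹ * ρ ^ 2 = ρ ^ 2 * (ρ * σ * ρ⁻¹ * σ) := by
      rw [← conj_tau_eq hσ hρ hσρ, hρ']; group
    simp only [LinearMap.comp_apply, LinearEquiv.coe_coe]
    rw [hmul, this, ← hmul, ← hmul, h1, h2, hT]
  · convert h3.comp (Equiv.arrowCongr (finRotate 3).symm P.toEquiv).bijective using 1
    funext x
    have e3 : U ρ (U ρ (U ρ (ι (P (x 1))))) = ι (P (x 1)) := by
      rw [hmul, hmul, ← pow_two, ← pow_succ, hρ]; simp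
    have e4 : U ρ (U ρ (U ρ (U ρ (ι (P (x 2)))))) = U ρ (ι (P (x 2))) := by
      rw [hmul (ρ), hmul, ← pow_two, ← pow_succ, hρ]; simp
    simp [Fin.sum_univ_three, Equiv.arrowCongr, pow_two, e3, e4]
    abel

lemma exists_equiv {W' : Type} [AddCommGroup W'] [Module k W'] {U' : Representation k G W'}
    (hσ : σ ^ 2 = 1) (hρ : ρ ^ 3 = 1) (hσρ : (σ * ρ) ^ 3 = 1)
    (hgen : Subgroup.closure {σ, ρ} = ⊤) (h : IsInducedFrom U σ ρ S T)
    (h' : IsInducedFrom U' σ ρ S T) :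
    ∃ e : W ≃ₗ[k] W', ∀ (g : G) (w : W), e (U g w) = U' g (e w) := by
  have key : ∀ {W : Type} [AddCommGroup W] [Module k W] {U : Representation k G W},
      IsInducedFrom U σ ρ S T → ∃ Φ : (Fin 3 → X) ≃ₗ[k] W,
        (∀ x, U ρ (Φ x) = Φ ![x 2, x 0, x 1]) ∧
        (∀ x, U σ (Φ x) = Φ ![S (x 0), T (S (x 1)), T (x 2)]) := by
    rintro W _ _ U ⟨ι, h1, h2, h3⟩
    let L : (Fin 3 → X) →ₗ[k] W :=
      ∑ i : Fin 3, (U ρ ^ (i : ℕ)) ∘ₗ ι ∘ₗ LinearMap.proj i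
    have hL : ∀ x, L x = ι (x 0) + U ρ (ι (x 1)) + U ρ (U ρ (ι (x 2))) := fun x => by
      simp [L, Fin.sum_univ_three, pow_two]
    have hmul : ∀ (a b : G) (w : W), U a (U b w) = U (a * b) w := fun a b w => by
      rw [map_mul, Module.End.mul_apply]
    have hρ' : ρ⁻¹ = ρ * ρ := inv_eq_of_mul_eq_one_left (by rw [← hρ, pow_succ, pow_two])
    have hLb : Function.Bijective L := by
      convert h3 using 1
      funext x
      simp [L]
    refine ⟨LinearEquiv.ofBijective L hLb, fun x => ?_, fun x => ?_⟩
    · have e : U ρ (U ρ (U ρ (ι (x 2)))) = ι (x 2) := by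
        rw [hmul, hmul, ← pow_two, ← pow_succ, hρ]; simp
      simp [hL, e]
      abel
    · have e1 : U σ (U ρ (ι (x 1))) = U ρ (ι (T (S (x 1)))) := by
        have : σ * ρ = ρ * (ρ * σ * ρ⁻¹ * σ) := by
          rw [← conj_tau_eq hσ hρ hσρ]
          calc σ * ρ = ρ ^ 3 * σ * (ρ ^ 3)⁻¹ * ρ := by rw [hρ]; simp
            _ = _ := by simp [pow_succ, mul_assoc]
        rw [hmul, this, ← hmul, ← hmul, h1, h2]
      have e2 : U σ (U ρ (U ρ (ι (x 2)))) = U ρ (U ρ (ι (T (x 2)))) := by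
        have : σ * (ρ * ρ) = (ρ * ρ) * (ρ * σ * ρ⁻¹) := by rw [← hρ']; group
        rw [hmul ρ, hmul, this, ← hmul, ← hmul, h2]
      simp [hL, e1, e2, h1]
  obtain ⟨Φ, hr, hs⟩ := key h
  obtain ⟨Φ', hr', hs'⟩ := key h'
  refine ⟨Φ.symm.trans Φ', fun g => ?_⟩
  have hg : g ∈ Subgroup.closure {σ, ρ} := hgen ▸ Subgroup.mem_top g
  induction hg using Subgroup.closure_induction with
  | mem g hg =>
    intro w
    obtain ⟨x, rfl⟩ := Φ.surjective w
    rcases hg with rfl | rfl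
    · simp [hs, hs']
    · simp [hr, hr']
  | one => simp
  | mul a b _ _ ha hb => intro w; simp only [map_mul, Module.End.mul_apply, ha, hb]
  | inv a _ ha =>
    intro w
    have := ha (U a⁻¹ w)
    rw [Representation.self_inv_apply] at this
    rw [this, Representation.inv_self_apply]

end IsInducedFrom

lemma smul_jordanBlock_mul_diagonal {k : Type} [Field k] {ζ : k} (hζ : ζ ^ 3 = 1) (n : ℕ) (φ : k) :
    (ζ • jordanBlock k n φ) * Matrix.diagonal (fun i : Fin n => ζ ^ (2 * (i : ℕ))) =
      Matrix.diagonal (fun i : Fin n => ζ ^ (2 * (i : ℕ))) * jordanBlock k n (ζ * φ) := by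
  ext i j
  rw [Matrix.mul_diagonal, Matrix.diagonal_mul]
  simp only [jordanBlock, Matrix.smul_apply, Matrix.of_apply, smul_eq_mul]
  split_ifs with h1 h2
  · subst h1; ring
  · rw [← h2]
    linear_combination ζ ^ (2 * (i : ℕ)) * hζ
  · ring

section Blocks

variable {k : Type} [Field k] {ζ : k}

/-- The diagonal matrix intertwining `V_{ζφ}` with the `ρ`-conjugate of `V_φ`. -/
def twistMatrix (ζ : k) (n : ℕ) : Matrix (Fin n ⊕ Fin n) (Fin n ⊕ Fin n) k :=
  Matrix.fromBlocks (ζ • Matrix.diagonal fun i : Fin n => ζ ^ (2 * (i : ℕ))) 0 0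
    (Matrix.diagonal fun i : Fin n => ζ ^ (2 * (i : ℕ)))

lemma tauBlock_mul_twistMatrix (hζ : ζ ^ 3 = 1) (n : ℕ) (φ : k) :
    tauBlock k ζ n φ * twistMatrix ζ n = twistMatrix ζ n * sigmaBlock k ζ n (ζ * φ) := by
  have h := smul_jordanBlock_mul_diagonal hζ n φ
  simp only [tauBlock, twistMatrix, sigmaBlock, Matrix.fromBlocks_multiply]
  set D := Matrix.diagonal fun i : Fin n => ζ ^ (2 * (i : ℕ))
  have hJ : jordanBlock k n φ * D = ζ ^ 2 • (D * jordanBlock k n (ζ * φ)) := by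
    rw [← h, Matrix.smul_mul, smul_smul, ← pow_succ, hζ, one_smul]
  congr 1 <;> simp
  rw [add_mul, hJ]
  simp [mul_add, smul_smul, pow_two]

lemma tauBlock_mul_sigmaBlock_mul_twistMatrix [CharP k 2] (hζ : ζ ^ 3 = 1) (hζ' : 1 + ζ + ζ ^ 2 = 0)
    (n : ℕ) (φ : k) : tauBlock k ζ n φ * (sigmaBlock k ζ n φ * twistMatrix ζ n) =
      twistMatrix ζ n * tauBlock k ζ n (ζ * φ) := by
  have h := smul_jordanBlock_mul_diagonal hζ n φ
  simp only [tauBlock, twistMatrix, sigmaBlock, Matrix.fromBlocks_multiply]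
  set D := Matrix.diagonal fun i : Fin n => ζ ^ (2 * (i : ℕ))
  have hJ : jordanBlock k n φ * D = ζ ^ 2 • (D * jordanBlock k n (ζ * φ)) := by
    rw [← h, Matrix.smul_mul, smul_smul, ← pow_succ, hζ, one_smul]
  have h2 : (2 : k) = 0 := CharTwo.two_eq_zero
  congr 1 <;> simp
  simp only [add_mul, mul_add, hJ, smul_add, smul_smul, Matrix.smul_mul, Matrix.mul_smul, one_mul, mul_one]
  match_scalars
  · linear_combination hζ' - hζ - h2
  · linear_combination hζ + hζ' - ζ * h2

lemma IsInducedFrom.mul_zeta [CharP k 2] {G W : Type} [Group G] [AddCommGroup W] [Module k W]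
    {U : Representation k G W} {σ ρ : G} (hσ : σ ^ 2 = 1) (hρ : ρ ^ 3 = 1) (hσρ : (σ * ρ) ^ 3 = 1)
    (hζ : ζ ^ 3 = 1) (hζ' : 1 + ζ + ζ ^ 2 = 0) {n : ℕ} {φ : k}
    (h : IsInducedFrom U σ ρ (Matrix.toLin' (sigmaBlock k ζ n φ))
      (Matrix.toLin' (tauBlock k ζ n φ))) :
    IsInducedFrom U σ ρ (Matrix.toLin' (sigmaBlock k ζ n (ζ * φ)))
      (Matrix.toLin' (tauBlock k ζ n (ζ * φ))) := by
  have h0 : ζ ≠ 0 := by rintro rfl; simp at hζ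
  have hdet : IsUnit (twistMatrix ζ n).det := by
    rw [twistMatrix, Matrix.det_fromBlocks_zero₂₁, Matrix.det_smul, Matrix.det_diagonal,
      isUnit_iff_ne_zero]
    simp [h0, Finset.prod_ne_zero_iff]
  have hinv := (twistMatrix ζ n).mul_nonsing_inv hdet
  have hinv' := (twistMatrix ζ n).nonsing_inv_mul hdet
  refine h.twist hσ hρ hσρ (Matrix.toLin'OfInv hinv' hinv) (fun v => ?_) (fun v => ?_)
  · change Matrix.toLin' _ (Matrix.toLin' _ v) = Matrix.toLin' _ (Matrix.toLin' _ v)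
    rw [← Matrix.toLin'_mul_apply, ← Matrix.toLin'_mul_apply, tauBlock_mul_twistMatrix hζ]
  · change Matrix.toLin' _ (Matrix.toLin' _ (Matrix.toLin' _ v)) =
      Matrix.toLin' _ (Matrix.toLin' _ v)
    rw [← Matrix.toLin'_mul_apply, ← Matrix.toLin'_mul_apply, ← Matrix.toLin'_mul_apply, mul_assoc,
      tauBlock_mul_sigmaBlock_mul_twistMatrix hζ hζ']

end Blocks

/-- **Lemma.** Let `G = A₄ = ⟨σ, ρ⟩`, `τ = ρσρ⁻¹`, `H = ⟨σ, τ⟩` its Sylow 2-subgroup.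
If `φ, ψ ∈ k \ {0}` satisfy `φ³ = ψ³`, then `Ind_H^G V_φ ≅ Ind_H^G V_ψ` as
representations of `G`; induced modules are encoded by the data of an injective
`H`-equivariant embedding whose three `ρ`-translates form an internal direct sum. -/
theorem stmt_13 (k : Type) [Field k] [IsAlgClosed k] [CharP k 2]
    (ζ : k) (hζ : IsPrimitiveRoot ζ 3)
    (G : Type) [Group G] (σ ρ : G)
    (hσ : σ ^ 2 = 1) (hρ : ρ ^ 3 = 1) (hσρ : (σ * ρ) ^ 3 = 1)
    (hcard : Nat.card G = 12) (hgen : Subgroup.closure {σ, ρ} = ⊤)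
    (τ : G) (hτ : τ = ρ * σ * ρ⁻¹)
    (H : Subgroup G) (hH : H = Subgroup.closure {σ, τ})
    (hσH : σ ∈ H) (hτH : τ ∈ H)
    (n : ℕ) (hn : 1 ≤ n) (φ ψ : k) (hφ : φ ≠ 0) (hψ : ψ ≠ 0) (hφψ : φ ^ 3 = ψ ^ 3)
    -- the representations V_φ and V_ψ of H
    (Vφ Vψ : Representation k ↥H (Fin n ⊕ Fin n → k))
    (hVφσ : Vφ ⟨σ, hσH⟩ =
      Matrix.toLin' (Matrix.fromBlocks 1 (ζ • (1 + jordanBlock k n φ)) 0 1))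
    (hVφτ : Vφ ⟨τ, hτH⟩ =
      Matrix.toLin' (Matrix.fromBlocks 1
        (ζ ^ 2 • (1 : Matrix (Fin n) (Fin n) k) + jordanBlock k n φ) 0 1))
    (hVψσ : Vψ ⟨σ, hσH⟩ =
      Matrix.toLin' (Matrix.fromBlocks 1 (ζ • (1 + jordanBlock k n ψ)) 0 1))
    (hVψτ : Vψ ⟨τ, hτH⟩ =
      Matrix.toLin' (Matrix.fromBlocks 1
        (ζ ^ 2 • (1 : Matrix (Fin n) (Fin n) k) + jordanBlock k n ψ) 0 1))
    -- a G-representation U realizing Ind_H^G V_φ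
    (W : Type) [AddCommGroup W] [Module k W]
    (U : Representation k G W)
    (ι : (Fin n ⊕ Fin n → k) →ₗ[k] W)
    (hinj : Function.Injective ι)
    (hequiv : ∀ (h : ↥H) (v : Fin n ⊕ Fin n → k), ι (Vφ h v) = U (h : G) (ι v))
    (hint : DirectSum.IsInternal fun i : Fin 3 =>
      Submodule.map (U ρ ^ (i : ℕ)) (LinearMap.range ι))
    -- a G-representation U' realizing Ind_H^G V_ψ
    (W' : Type) [AddCommGroup W'] [Module k W']
    (U' : Representation k G W')
    (ι' : (Fin n ⊕ Fin n → k) →ₗ[k] W')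
    (hinj' : Function.Injective ι')
    (hequiv' : ∀ (h : ↥H) (v : Fin n ⊕ Fin n → k), ι' (Vψ h v) = U' (h : G) (ι' v))
    (hint' : DirectSum.IsInternal fun i : Fin 3 =>
      Submodule.map (U' ρ ^ (i : ℕ)) (LinearMap.range ι')) :
    -- conclusion: Ind_H^G V_φ ≅ Ind_H^G V_ψ as representations of G
    ∃ e : W ≃ₗ[k] W', ∀ (g : G) (w : W), e (U g w) = U' g (e w) := by
  have hbij : ∀ {W : Type} [AddCommGroup W] [Module k W] (U : Representation k G W),
      Function.Injective (U ρ) := fun U => (U.apply_bijective ρ).1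
  have hind : IsInducedFrom U σ ρ (Matrix.toLin' (sigmaBlock k ζ n φ))
      (Matrix.toLin' (tauBlock k ζ n φ)) := by
    refine ⟨ι, fun v => ?_, fun v => ?_, bijective_sum_of_isInternal _ (hbij U) ι hinj hint⟩
    · rw [sigmaBlock, ← hVφσ, hequiv]
    · rw [tauBlock, ← hVφτ, hequiv, ← hτ]
  have hind' : IsInducedFrom U' σ ρ (Matrix.toLin' (sigmaBlock k ζ n ψ))
      (Matrix.toLin' (tauBlock k ζ n ψ)) := by
    refine ⟨ι', fun v => ?_, fun v => ?_, bijective_sum_of_isInternal _ (hbij U') ι' hinj' hint'⟩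
    · rw [sigmaBlock, ← hVψσ, hequiv']
    · rw [tauBlock, ← hVψτ, hequiv', ← hτ]
  have hζ' : 1 + ζ + ζ ^ 2 = 0 := by
    simpa [Finset.sum_range_succ] using hζ.geom_sum_eq_zero (by norm_num)
  obtain ⟨i, -, hi⟩ := hζ.eq_pow_of_pow_eq_one (ξ := ψ / φ)
    (by rw [div_pow, hφψ, div_self (pow_ne_zero 3 hψ)])
  have hpow : ∀ j : ℕ, IsInducedFrom U σ ρ (Matrix.toLin' (sigmaBlock k ζ n (ζ ^ j * φ)))
      (Matrix.toLin' (tauBlock k ζ n (ζ ^ j * φ))) := by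
    intro j
    induction j with
    | zero => simpa using hind
    | succ j ih =>
      rw [pow_succ', mul_assoc]
      exact ih.mul_zeta hσ hρ hσρ hζ.pow_eq_one hζ'
  have hψ' : ζ ^ i * φ = ψ := by rw [hi, div_mul_cancel₀ _ hφ]
  exact (hψ' ▸ hpow i).exists_equiv hσ hρ hσρ hgen hind'
end
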